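/- arXiv:1709.04376 — 5 statements merged into one kernel-verified Lean document; each statement's English description precedes it below -/
import Mathlib

section
/- Let g₁,…,g_m be real-valued complex polynomials in n complex variables and K := {z ∈ ℂⁿ : gᵢ(z,z̄) ≥ 0, i = 1,…,m}. Assume that for some R > 0 both R² − (|z₁|²+…+|zₙ|²) and (|z₁|²+…+|zₙ|²) − R² occur among g₁,…,g_m (so K lies on the sphere of radius R and the sphere equation is among the constraints). If f is a real-valued complex polynomial with f(z,z̄) > 0 for all z ∈ K, then there exist Hermitian sums-of-squares σ₀, σ₁, …, σ_m such that f(z,z̄) = σ₀(z) + Σ_{i=1}^m σᵢ(z)·gᵢ(z,z̄) for all z ∈ ℂⁿ. -/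
/-!
The functions `σ₀ + ∑ σᵢ gᵢ` form a convex cone `M` which is a module over the semiring `T` of
Hermitian sums of squares; `T` is closed under products because `|p|² |q|² = |p q|²`. The statement
is an instance of the Kadison–Dubois principle for such a pair, inside the algebra `A` of real
polynomial functions on `ℂⁿ`.

* By polarization `A = T - T` (`exists_sub_of_mem_polyFn`). Hence `M` contains every multiple
  `(R² - |z|²) h`, `h ∈ A`, as both signs of the sphere equation are among the `gᵢ`.
* The sphere equation makes `M` Archimedean, in the strong form that for each `t ∈ T` multiplication
  by some `N - t` preserves `M` (`exists_bound`). In particular `1` is an order unit.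
* If `f ∉ M`, the Riesz extension theorem gives a state `L` of `(A, M)` with `L f ≤ 0`
  (`exists_state_nonpos`). States form a compact convex set, so by Krein–Milman `L` may be taken
  extreme among the minimizers of `L f`, and such a state is multiplicative
  (`mem_of_forall_algHom_pos`).
* A multiplicative state is evaluation at a point `w` (`exists_eval_of_algHom`). Nonnegativity on
  `M` says `gᵢ(w) ≥ 0` for all `i`, so `f(w) > 0` by hypothesis, contradicting `L f ≤ 0`.
-/


open scoped BigOperators ComplexConjugate ComplexOrder
open MeasureTheory

namespace Stmt

/-- Total degree of a multi-index. -/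
def mdeg {n : ℕ} (α : Fin n → ℕ) : ℕ := ∑ i, α i

/-- Monomial power `z^α`. -/
def mpow {n : ℕ} (z : Fin n → ℂ) (α : Fin n → ℕ) : ℂ := ∏ i, z i ^ α i

/-- Coefficient array of a complex polynomial in `z` and `conj z`. -/
abbrev Coef (n : ℕ) := (Fin n → ℕ) → (Fin n → ℕ) → ℂ

/-- Hermitian symmetry of coefficients (real-valuedness of the polynomial). -/
def HermSym {n : ℕ} (c : Coef n) : Prop := ∀ α β, c β α = conj (c α β)

/-- Degree bound: nonzero coefficients have `|α|, |β| ≤ k`. -/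
def DegLE {n : ℕ} (c : Coef n) (k : ℕ) : Prop :=
  ∀ α β, c α β ≠ 0 → mdeg α ≤ k ∧ mdeg β ≤ k

/-- Finitely many nonzero coefficients. -/
def FinSupp {n : ℕ} (c : Coef n) : Prop :=
  (Function.support fun p : (Fin n → ℕ) × (Fin n → ℕ) => c p.1 p.2).Finite

/-- Evaluation `p(z, z̄) = Σ c_{α β} z^α z̄^β`. -/
noncomputable def evalC {n : ℕ} (c : Coef n) (z : Fin n → ℂ) : ℂ :=
  ∑ᶠ p : (Fin n → ℕ) × (Fin n → ℕ),
    c p.1 p.2 * mpow z p.1 * mpow (fun i => conj (z i)) p.2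

/-- Multi-indices of total degree ≤ d. -/
def Idx (n d : ℕ) := {α : Fin n → ℕ // mdeg α ≤ d}

lemma comp_le_mdeg {n : ℕ} (α : Fin n → ℕ) (i : Fin n) : α i ≤ mdeg α :=
  Finset.single_le_sum (fun j _ => Nat.zero_le _) (Finset.mem_univ i)

noncomputable instance {n d : ℕ} : Fintype (Idx n d) :=
  Fintype.ofInjective
    (fun a : Idx n d =>
      (fun i => (⟨a.1 i, Nat.lt_succ_of_le ((comp_le_mdeg a.1 i).trans a.2)⟩ : Fin (d+1)) :
        Fin n → Fin (d+1)))
    (by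
      intro a b h
      apply Subtype.ext
      funext i
      have := congrFun h i
      simpa [Fin.mk.injEq] using this)

instance {n d : ℕ} : DecidableEq (Idx n d) := fun a b =>
  decidable_of_iff (a.1 = b.1) Subtype.ext_iff.symm

/-- Moment matrix of order `d`. -/
noncomputable def momentMat {n : ℕ} (y : Coef n) (d : ℕ) :
    Matrix (Idx n d) (Idx n d) ℂ :=
  Matrix.of fun a b => y a.1 b.1

/-- Localizing matrix `M_e(c·y)`. -/
noncomputable def locMat {n : ℕ} (c y : Coef n) (e : ℕ) :
    Matrix (Idx n e) (Idx n e) ℂ :=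
  Matrix.of fun a b =>
    ∑ᶠ p : (Fin n → ℕ) × (Fin n → ℕ), c p.1 p.2 * y (a.1 + p.1) (b.1 + p.2)

/-- The 3×3 block joint-hyponormality matrix
`[[M_e(y), M_e(z_i y), M_e(z_j y)], [M_e(z̄_i y), M_e(|z_i|² y), M_e(z_j z̄_i y)],
  [M_e(z̄_j y), M_e(z_i z̄_j y), M_e(|z_j|² y)]]`. -/
noncomputable def hypoMat {n : ℕ} (y : Coef n) (e : ℕ) (i j : Fin n) :
    Matrix (Idx n e ⊕ Idx n e ⊕ Idx n e) (Idx n e ⊕ Idx n e ⊕ Idx n e) ℂ :=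
  Matrix.of fun a b =>
    let sh : Idx n e ⊕ Idx n e ⊕ Idx n e → (Fin n → ℕ) × (Fin n → ℕ) :=
      Sum.elim (fun x => (x.1, 0))
        (Sum.elim (fun x => (x.1, Pi.single i 1)) (fun x => (x.1, Pi.single j 1)))
    y ((sh a).1 + (sh b).2) ((sh b).1 + (sh a).2)

/-- `μ` is a positive `S`-atomic measure. -/
def IsAtomic {X : Type*} [MeasurableSpace X] (μ : Measure X) (S : ℕ) : Prop :=
  ∃ (pt : Fin S → X) (w : Fin S → ℝ),
    Function.Injective pt ∧ (∀ j, 0 < w j) ∧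
    μ = ∑ j, (ENNReal.ofReal (w j)) • Measure.dirac (pt j)

/-- Hermitian sum-of-squares of degree ≤ d. -/
def IsHermSOSDeg {n : ℕ} (σ : (Fin n → ℂ) → ℝ) (d : ℕ) : Prop :=
  ∃ (N : ℕ) (p : Fin N → (Fin n → ℕ) → ℂ),
    (∀ k α, ¬ mdeg α ≤ d → p k α = 0) ∧
    ∀ z, σ z = ∑ k, Complex.normSq (∑ᶠ α : Fin n → ℕ, p k α * mpow z α)

/-- Hermitian sum-of-squares (of some degree). -/
def IsHermSOS {n : ℕ} (σ : (Fin n → ℂ) → ℝ) : Prop := ∃ d, IsHermSOSDeg σ d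

/-! ### States of an ordered algebra and the abstract Positivstellensatz -/

/-- The states of `(A, M)`: linear functionals on `A` that are nonnegative on `M` and take the value
`1` at `1`. They are kept as bare functions so that the set lives in the product space `A → ℝ`,
whose topology is the topology of pointwise convergence. -/
def stateSet {A : Type*} [CommRing A] [Algebra ℝ A] (M : Set A) : Set (A → ℝ) :=
  {L | (∀ x y, L (x + y) = L x + L y) ∧ (∀ (c : ℝ) x, L (c • x) = c * L x) ∧
    (∀ x ∈ M, 0 ≤ L x) ∧ L 1 = 1}

/-- The order unit `1` confines every state to a product of compact intervals. -/
lemma isCompact_stateSet {A : Type*} [CommRing A] [Algebra ℝ A] (M : Set A)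
    (hord : ∀ a : A, ∃ N : ℝ, algebraMap ℝ A N - a ∈ M) : IsCompact (stateSet M) := by
  choose N hN using hord
  have hsub : stateSet M ⊆ Set.pi Set.univ fun a => Set.Icc (-N (-a)) (N a) := by
    rintro L ⟨hadd, hsm, hnn, h1⟩ a -
    have hval : ∀ b, L (algebraMap ℝ A (N b) - b) = N b - L b := by
      intro b
      have hb := hadd (algebraMap ℝ A (N b) - b) b
      rw [sub_add_cancel, Algebra.algebraMap_eq_smul_one, hsm, h1] at hb
      rw [Algebra.algebraMap_eq_smul_one]
      linarith
    have hneg : L (-a) = -L a := by simpa using hsm (-1) a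
    have e1 := hnn _ (hN a)
    have e2 := hnn _ (hN (-a))
    rw [hval] at e1 e2
    exact ⟨by linarith, by linarith⟩
  refine (isCompact_univ_pi fun a => isCompact_Icc).of_isClosed_subset ?_ hsub
  simp only [stateSet, Set.ofPred_and, Set.ofPred_forall]
  refine IsClosed.inter ?_ (IsClosed.inter ?_ (IsClosed.inter ?_ ?_))
  · exact isClosed_iInter fun x => isClosed_iInter fun y =>
      isClosed_eq (by fun_prop) (by fun_prop)
  · exact isClosed_iInter fun x => isClosed_iInter fun y =>
      isClosed_eq (by fun_prop) (by fun_prop)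
  · exact isClosed_iInter fun x => isClosed_iInter fun _ =>
      isClosed_le (by fun_prop) (by fun_prop)
  · exact isClosed_eq (by fun_prop) (by fun_prop)

/-- Separation of a point from a cone with order unit `1`, by the Riesz extension theorem. -/
lemma exists_state_nonpos {A : Type*} [CommRing A] [Algebra ℝ A] (M : PointedCone ℝ A)
    (h1 : (1 : A) ∈ M)
    (hord : ∀ a : A, ∃ N : ℝ, algebraMap ℝ A N - a ∈ M) {a : A} (ha : a ∉ M) :
    ∃ L ∈ stateSet (M : Set A), L a ≤ 0 := by
  have hne : (1 : A) ≠ 0 := by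
    intro h
    apply ha
    rw [← mul_one a, h, mul_zero]
    exact M.zero_mem
  have hsmul : ∀ (c : ℝ) (x : A), 0 ≤ c → x ∈ M → c • x ∈ M :=
    fun c x hc hx => PointedCone.smul_mem M hc hx
  -- The cone `M - ℝ≥0 a`, on which the functional has to be nonnegative.
  let M' : PointedCone ℝ A :=
    { carrier := {x | ∃ m ∈ M, ∃ s : ℝ, 0 ≤ s ∧ x = m - s • a}
      zero_mem' := ⟨0, M.zero_mem, 0, le_rfl, by simp⟩
      smul_mem' := by
        rintro ⟨c, hc⟩ _ ⟨m, hm, s, hs, rfl⟩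
        refine ⟨c • m, hsmul c m hc hm, c * s, mul_nonneg hc hs, ?_⟩
        rw [← smul_smul, ← smul_sub]
        rfl
      add_mem' := by
        rintro _ _ ⟨m, hm, s, hs, rfl⟩ ⟨m', hm', s', hs', rfl⟩
        exact ⟨m + m', M.add_mem hm hm', s + s', by positivity, by rw [add_smul]; abel⟩ }
  have key : ∀ c : ℝ, c • (1 : A) ∈ M' → 0 ≤ c := by
    rintro c ⟨m, hm, s, hs, hc⟩
    by_contra! hlt
    have hm' : m + (-c) • (1 : A) ∈ M := M.add_mem hm (hsmul _ _ (by linarith) h1)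
    have hsa : s • a = m + (-c) • (1 : A) := by rw [neg_smul, hc]; abel
    rcases hs.eq_or_lt with rfl | hs
    · -- A negative constant in `M` forces `M = A`.
      rw [zero_smul, sub_zero] at hc
      obtain ⟨N, hN⟩ := hord (-a)
      apply ha
      have hbig : (|N| + 1) • (-1 : A) ∈ M := by
        have : (|N| + 1) • (-1 : A) = ((|N| + 1) * (-c)⁻¹) • m := by
          rw [← hc, smul_smul, mul_assoc]
          have : (-c)⁻¹ * c = -1 := by rw [inv_neg, neg_mul, inv_mul_cancel₀ hlt.ne]
          rw [this]; module
        rw [this]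
        exact hsmul _ _ (mul_nonneg (by positivity) (inv_nonneg.2 (by linarith))) hm
      have hpos : (|N| + 1 - N) • (1 : A) ∈ M :=
        hsmul _ _ (by linarith [le_abs_self N]) h1
      have := M.add_mem (M.add_mem hN hbig) hpos
      convert this using 1
      rw [Algebra.algebraMap_eq_smul_one]
      module
    · apply ha
      have := hsmul _ _ (inv_nonneg.2 hs.le) hm'
      rwa [← hsa, smul_smul, inv_mul_cancel₀ hs.ne', one_smul] at this
  obtain ⟨L, hL, hLM⟩ := riesz_extension M' (LinearPMap.mkSpanSingleton (1 : A) (1 : ℝ) hne)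
    (by
      rintro ⟨x, hx⟩ hxM
      obtain ⟨c, rfl⟩ := Submodule.mem_span_singleton.1 hx
      rw [LinearPMap.mkSpanSingleton'_apply]
      simpa using key c hxM)
    (by
      intro y
      obtain ⟨N, hN⟩ := hord (-y)
      refine ⟨⟨N • (1 : A), Submodule.mem_span_singleton.2 ⟨N, rfl⟩⟩, ?_⟩
      refine ⟨_, hN, 0, le_rfl, ?_⟩
      rw [Algebra.algebraMap_eq_smul_one]
      simp)
  refine ⟨L, ⟨L.map_add, fun c x => by simp, ?_, ?_⟩, ?_⟩
  · intro x hx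
    exact hLM x ⟨x, hx, 0, le_rfl, by simp⟩
  · have h1' : (1 : A) ∈ Submodule.span ℝ {(1 : A)} := Submodule.mem_span_singleton_self _
    have := hL ⟨1, h1'⟩
    rw [this]
    exact LinearPMap.mkSpanSingleton_apply ℝ ℝ hne 1
  · have := hLM (-a) ⟨0, M.zero_mem, 1, zero_le_one, by simp⟩
    rw [map_neg] at this
    linarith

/-- An abstract Positivstellensatz of Kadison–Dubois type for a cone `M` stable under multiplication
by a set `T` with `A = T - T`. A state that is extreme among those minimizing the value at `a` is
multiplicative: for `t ∈ T` with `N - t` also preserving `M`, the functionals `L (t * ·)` and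
`L ((N - t) * ·)` are nonnegative on `M` and sum to `N * L`, so both are multiples of `L`. -/
theorem mem_of_forall_algHom_pos {A : Type*} [CommRing A] [Algebra ℝ A] (M : PointedCone ℝ A)
    (T : Set A) (h1 : (1 : A) ∈ M)
    (hTM : ∀ t ∈ T, ∀ x ∈ M, t * x ∈ M)
    (hord : ∀ a : A, ∃ N : ℝ, algebraMap ℝ A N - a ∈ M)
    (hdiff : ∀ a : A, ∃ s ∈ T, ∃ t ∈ T, a = s - t)
    (hbdd : ∀ t ∈ T, ∃ N : ℝ, ∀ x ∈ M, (algebraMap ℝ A N - t) * x ∈ M) {a : A}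
    (ha : ∀ φ : A →ₐ[ℝ] ℝ, (∀ x ∈ M, 0 ≤ φ x) → 0 < φ a) : a ∈ M := by
  by_contra haM
  obtain ⟨L₀, hL₀, hL₀a⟩ := exists_state_nonpos M h1 hord haM
  have hcomp := isCompact_stateSet (M : Set A) hord
  have hcont : Continuous fun L : A → ℝ => L a := continuous_apply a
  obtain ⟨L₁, hL₁, hmin⟩ := hcomp.exists_isMinOn ⟨L₀, hL₀⟩ hcont.continuousOn
  have hL₁a : L₁ a ≤ 0 := (hmin hL₀).trans hL₀a
  -- An extreme point of the face on which `L ↦ L a` is minimal.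
  obtain ⟨L, hLext⟩ : ((stateSet (M : Set A) ∩ {L | L a = L₁ a}).extremePoints ℝ).Nonempty :=
    (hcomp.inter_right (isClosed_eq hcont continuous_const)).extremePoints_nonempty
      ⟨L₁, hL₁, rfl⟩
  obtain ⟨⟨⟨hadd, hsm, hnn, hone⟩, hLa⟩, hext⟩ := hLext
  have hneg : ∀ x, L (-x) = -L x := fun x => by simpa using hsm (-1) x
  have hsub : ∀ x y, L (x - y) = L x - L y := fun x y => by
    rw [sub_eq_add_neg, hadd, hneg]; ring
  have hmulT : ∀ t ∈ T, ∀ b, L (t * b) = L t * L b := by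
    intro t ht b
    have hpos : 0 ≤ L t := hnn _ (by simpa using hTM t ht 1 h1)
    rcases hpos.eq_or_lt with h | h
    · obtain ⟨N, hN⟩ := hord b
      obtain ⟨N', hN'⟩ := hord (-b)
      have e1 := hnn _ (hTM t ht _ hN)
      have e2 := hnn _ (hTM t ht _ hN')
      rw [mul_sub, hsub, mul_comm, ← Algebra.smul_def, hsm] at e1
      rw [mul_sub, hsub, mul_comm, ← Algebra.smul_def, hsm, mul_neg, hneg] at e2
      rw [← h] at e1 e2 ⊢
      linarith
    · obtain ⟨N₀, hN₀⟩ := hbdd t ht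
      have hN₀' : ∀ x ∈ M, 0 ≤ N₀ * L x - L (t * x) := by
        intro x hx
        have := hnn _ (hN₀ x hx)
        rwa [sub_mul, hsub, ← Algebra.smul_def, hsm] at this
      -- Raising the bound by one keeps the second weight positive.
      obtain ⟨N, hN⟩ : ∃ N, N = N₀ + 1 := ⟨_, rfl⟩
      have hNt : 0 < N - L t := by
        have := hN₀' 1 h1
        rw [hone, mul_one, mul_one] at this
        linarith
      have hN0 : 0 < N := by linarith
      have hmin' : ∀ K ∈ stateSet (M : Set A), L a ≤ K a := fun K hK => by
        rw [show L a = L₁ a from hLa]; exact hmin hK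
      have hL1 : (fun x => (L t)⁻¹ * L (t * x)) ∈ stateSet (M : Set A) := by
        refine ⟨fun x y => ?_, fun c x => ?_, fun x hx => ?_, ?_⟩
        · simp only [mul_add, hadd]
        · simp only [mul_smul_comm, hsm]; ring
        · exact mul_nonneg (inv_nonneg.2 hpos) (hnn _ (hTM t ht x hx))
        · simp only [mul_one]; exact inv_mul_cancel₀ h.ne'
      have hL2 : (fun x => (N - L t)⁻¹ * (N * L x - L (t * x))) ∈ stateSet (M : Set A) := by
        refine ⟨fun x y => ?_, fun c x => ?_, fun x hx => ?_, ?_⟩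
        · simp only [mul_add, hadd]; ring
        · simp only [mul_smul_comm, hsm]; ring
        · refine mul_nonneg (inv_nonneg.2 hNt.le) ?_
          have := hN₀' x hx
          have := hnn x hx
          rw [hN]; linarith
        · simp only [mul_one, hone]; exact inv_mul_cancel₀ hNt.ne'
      have hcomb : ∀ x, L t / N * ((L t)⁻¹ * L (t * x)) +
          (N - L t) / N * ((N - L t)⁻¹ * (N * L x - L (t * x))) = L x := by
        intro x
        field_simp
        ring
      have hw1 : 0 < L t / N := div_pos h hN0
      have hw2 : 0 < (N - L t) / N := div_pos hNt hN0
      have hw : L t / N + (N - L t) / N = 1 := by field_simp; ring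
      have hca := hcomb a
      have m1 := hmin' _ hL1
      have m2 := hmin' _ hL2
      have q1 : (L t)⁻¹ * L (t * a) = L a := by
        have e1 := mul_nonneg hw1.le (sub_nonneg.2 m1)
        have e2 := mul_nonneg hw2.le (sub_nonneg.2 m2)
        have e3 : L t / N * ((L t)⁻¹ * L (t * a) - L a) = 0 := by
          refine le_antisymm ?_ e1
          linear_combination e2 + hca - L a * hw
        have := (mul_eq_zero.1 e3).resolve_left hw1.ne'
        linarith
      have q2 : (N - L t)⁻¹ * (N * L a - L (t * a)) = L a := by
        rw [q1] at hca
        have : (N - L t) / N * ((N - L t)⁻¹ * (N * L a - L (t * a)) - L a) = 0 := by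
          linear_combination hca - L a * hw
        have := (mul_eq_zero.1 this).resolve_left hw2.ne'
        linarith
      have := hext ⟨hL1, q1.trans hLa⟩ ⟨hL2, q2.trans hLa⟩
        ⟨L t / N, (N - L t) / N, hw1, hw2, hw, funext hcomb⟩
      have := congrFun this b
      rw [← this]
      field_simp
  have hmul : ∀ x y, L (x * y) = L x * L y := by
    intro x y
    obtain ⟨s, hs, t, ht, rfl⟩ := hdiff x
    rw [sub_mul, hsub, hsub, hmulT s hs, hmulT t ht, sub_mul]
  let φ : A →ₐ[ℝ] ℝ := AlgHom.ofLinearMap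
    { toFun := L, map_add' := hadd, map_smul' := fun c x => by simp [hsm] } hone hmul
  have := ha φ hnn
  have hφ : φ a = L₁ a := hLa
  linarith

/-! ### Hermitian sums of squares and polynomial functions -/

open MvPolynomial in
/-- The multiplicative map sending a holomorphic polynomial `P` to the function `|P|²`. -/
noncomputable def sqAbs (n : ℕ) : MvPolynomial (Fin n) ℂ →* ((Fin n → ℂ) → ℝ) where
  toFun P z := Complex.normSq (eval z P)
  map_one' := by ext z; simp
  map_mul' P Q := by ext z; simp

/-- The semiring of Hermitian sums of squares, as functions on `ℂⁿ`. -/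
noncomputable def sosFn (n : ℕ) : Subsemiring ((Fin n → ℂ) → ℝ) :=
  (MonoidHom.mrange (sqAbs n)).subsemiringClosure

lemma sqAbs_mem {n : ℕ} (P : MvPolynomial (Fin n) ℂ) : sqAbs n P ∈ sosFn n := by
  rw [sosFn, Submonoid.subsemiringClosure_mem]
  exact AddSubmonoid.subset_closure ⟨P, rfl⟩

lemma sosFn_induction {n : ℕ} {p : ∀ s : (Fin n → ℂ) → ℝ, s ∈ sosFn n → Prop}
    (sq : ∀ P, p (sqAbs n P) (sqAbs_mem P)) (zero : p 0 (zero_mem _))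
    (add : ∀ s t hs ht, p s hs → p t ht → p (s + t) (add_mem hs ht)) {s : (Fin n → ℂ) → ℝ}
    (hs : s ∈ sosFn n) : p s hs := by
  have hmem : ∀ {x}, x ∈ AddSubmonoid.closure (MonoidHom.mrange (sqAbs n) : Set _) →
      x ∈ sosFn n := fun hx => (Submonoid.subsemiringClosure_mem _).2 hx
  suffices h : ∃ h, p s h from h.2
  have hs' := (Submonoid.subsemiringClosure_mem _).1 hs
  induction hs' using AddSubmonoid.closure_induction with
  | mem x hx => obtain ⟨P, rfl⟩ := hx; exact ⟨_, sq P⟩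
  | zero => exact ⟨_, zero⟩
  | add x y hx hy ihx ihy =>
    obtain ⟨h1, h2⟩ := ihx (hmem hx)
    obtain ⟨h3, h4⟩ := ihy (hmem hy)
    exact ⟨_, add x y h1 h3 h2 h4⟩

lemma exists_sum_of_mem_sosFn {n : ℕ} {s : (Fin n → ℂ) → ℝ} (hs : s ∈ sosFn n) :
    ∃ (N : ℕ) (P : Fin N → MvPolynomial (Fin n) ℂ), s = ∑ k, sqAbs n (P k) := by
  induction hs using sosFn_induction with
  | sq P => exact ⟨1, fun _ => P, by simp⟩
  | zero => exact ⟨0, Fin.elim0, by simp⟩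
  | add s t hs ht ihs iht =>
    obtain ⟨N, P, rfl⟩ := ihs
    obtain ⟨N', P', rfl⟩ := iht
    exact ⟨N + N', Fin.append P P', by simp [Fin.sum_univ_add]⟩

lemma finsum_coeff_mul_mpow {n : ℕ} (P : MvPolynomial (Fin n) ℂ) (z : Fin n → ℂ) :
    ∑ᶠ α : Fin n → ℕ, P.coeff (Finsupp.equivFunOnFinite.symm α) * mpow z α =
      MvPolynomial.eval z P := by
  rw [← finsum_comp_equiv (Finsupp.equivFunOnFinite : (Fin n →₀ ℕ) ≃ (Fin n → ℕ))]
  rw [finsum_eq_sum_of_support_subset (s := P.support), MvPolynomial.eval_eq']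
  · simp [mpow]
  · intro m hm
    simp only [Function.mem_support] at hm
    simp only [Finset.mem_coe, MvPolynomial.mem_support_iff]
    intro h
    apply hm
    simp [h]

lemma isHermSOS_of_mem {n : ℕ} {s : (Fin n → ℂ) → ℝ} (hs : s ∈ sosFn n) : IsHermSOS s := by
  obtain ⟨N, P, rfl⟩ := exists_sum_of_mem_sosFn hs
  refine ⟨Finset.univ.sup fun k => (P k).totalDegree, N,
    fun k α => (P k).coeff (Finsupp.equivFunOnFinite.symm α), ?_, ?_⟩
  · intro k α hα
    by_contra hne
    apply hα
    have h1 := MvPolynomial.le_totalDegree (MvPolynomial.mem_support_iff.2 hne)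
    have h2 := Finset.le_sup (f := fun k => (P k).totalDegree) (Finset.mem_univ k)
    refine le_trans (le_of_eq ?_) (h1.trans h2)
    rw [Finsupp.sum_fintype _ _ fun _ => rfl]
    rfl
  · intro z
    simp only [finsum_coeff_mul_mpow, Finset.sum_apply]
    rfl

/-- The algebra of real-valued polynomial functions on `ℂⁿ`, generated by the real and imaginary
parts of the coordinates. -/
noncomputable def polyFn (n : ℕ) : Subalgebra ℝ ((Fin n → ℂ) → ℝ) :=
  Algebra.adjoin ℝ (Set.range (fun i z => (z i).re) ∪ Set.range (fun i z => (z i).im))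

/-- Complex-valued functions whose real and imaginary parts are polynomial functions. -/
noncomputable def cpolyFn (n : ℕ) : Subalgebra ℂ ((Fin n → ℂ) → ℂ) where
  carrier := {φ | (fun z => (φ z).re) ∈ polyFn n ∧ (fun z => (φ z).im) ∈ polyFn n}
  mul_mem' := by
    rintro φ ψ ⟨h1, h2⟩ ⟨h3, h4⟩
    exact ⟨(polyFn n).sub_mem ((polyFn n).mul_mem h1 h3) ((polyFn n).mul_mem h2 h4),
      (polyFn n).add_mem ((polyFn n).mul_mem h1 h4) ((polyFn n).mul_mem h2 h3)⟩
  add_mem' := by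
    rintro φ ψ ⟨h1, h2⟩ ⟨h3, h4⟩
    exact ⟨(polyFn n).add_mem h1 h3, (polyFn n).add_mem h2 h4⟩
  algebraMap_mem' c :=
    ⟨(polyFn n).algebraMap_mem c.re, (polyFn n).algebraMap_mem c.im⟩

lemma coord_mem_cpolyFn {n : ℕ} (i : Fin n) : (fun z : Fin n → ℂ => z i) ∈ cpolyFn n :=
  ⟨Algebra.subset_adjoin (Or.inl ⟨i, rfl⟩), Algebra.subset_adjoin (Or.inr ⟨i, rfl⟩)⟩

lemma conj_coord_mem_cpolyFn {n : ℕ} (i : Fin n) :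
    (fun z : Fin n → ℂ => conj (z i)) ∈ cpolyFn n :=
  ⟨(coord_mem_cpolyFn i).1, (polyFn n).neg_mem (coord_mem_cpolyFn i).2⟩

lemma eval_mem_cpolyFn {n : ℕ} (P : MvPolynomial (Fin n) ℂ) :
    (fun z => MvPolynomial.eval z P) ∈ cpolyFn n := by
  induction P using MvPolynomial.induction_on with
  | C c => simp only [MvPolynomial.eval_C]; exact (cpolyFn n).algebraMap_mem c
  | add P Q hP hQ => simp only [map_add]; exact (cpolyFn n).add_mem hP hQ
  | mul_X P i hP =>
    simp only [map_mul, MvPolynomial.eval_X]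
    exact (cpolyFn n).mul_mem hP (coord_mem_cpolyFn i)

lemma evalC_re_mem_polyFn {n : ℕ} {c : Coef n} (hc : FinSupp c) :
    (fun z => (evalC c z).re) ∈ polyFn n := by
  suffices h : (fun z => evalC c z) ∈ cpolyFn n from h.1
  have heq : (fun z => evalC c z) = ∑ p ∈ hc.toFinset, fun z : Fin n → ℂ =>
      c p.1 p.2 * mpow z p.1 * mpow (fun i => conj (z i)) p.2 := by
    ext z
    rw [Finset.sum_apply, evalC]
    refine finsum_eq_sum_of_support_subset _ fun p hp => ?_
    rw [Function.mem_support] at hp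
    refine (Set.Finite.mem_toFinset hc).2 ?_
    rw [Function.mem_support]
    intro h
    simp [h] at hp
  rw [heq]
  refine (cpolyFn n).sum_mem fun p _ => ?_
  refine (cpolyFn n).mul_mem ((cpolyFn n).mul_mem ((cpolyFn n).algebraMap_mem (c p.1 p.2)) ?_) ?_
  · have : (fun z : Fin n → ℂ => mpow z p.1) = ∏ i, (fun z : Fin n → ℂ => z i) ^ p.1 i := by
      ext z; simp [mpow]
    rw [this]
    exact (cpolyFn n).prod_mem fun i _ => (cpolyFn n).pow_mem (coord_mem_cpolyFn i) _
  · have : (fun z : Fin n → ℂ => mpow (fun i => conj (z i)) p.2) =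
        ∏ i, (fun z : Fin n → ℂ => conj (z i)) ^ p.2 i := by
      ext z; simp [mpow]
    rw [this]
    exact (cpolyFn n).prod_mem fun i _ => (cpolyFn n).pow_mem (conj_coord_mem_cpolyFn i) _

lemma sosFn_le_polyFn {n : ℕ} {s : (Fin n → ℂ) → ℝ} (hs : s ∈ sosFn n) : s ∈ polyFn n := by
  induction hs using sosFn_induction with
  | sq P =>
    obtain ⟨h1, h2⟩ := eval_mem_cpolyFn P
    exact (polyFn n).add_mem ((polyFn n).mul_mem h1 h1) ((polyFn n).mul_mem h2 h2)
  | zero => exact (polyFn n).zero_mem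
  | add s t _ _ ihs iht => exact (polyFn n).add_mem ihs iht

lemma const_mem_sosFn {n : ℕ} {c : ℝ} (hc : 0 ≤ c) :
    algebraMap ℝ ((Fin n → ℂ) → ℝ) c ∈ sosFn n := by
  convert sqAbs_mem (n := n) (MvPolynomial.C ((√c : ℝ) : ℂ)) using 1
  ext z
  simp [sqAbs, Real.mul_self_sqrt hc]

/-- Polarization: every real polynomial function is a difference of Hermitian sums of squares. -/
lemma exists_sub_of_mem_polyFn {n : ℕ} {h : (Fin n → ℂ) → ℝ} (hh : h ∈ polyFn n) :
    ∃ s ∈ sosFn n, ∃ t ∈ sosFn n, h = s - t := by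
  have h4 : algebraMap ℝ ((Fin n → ℂ) → ℝ) (1 / 4) ∈ sosFn n := const_mem_sosFn (by norm_num)
  induction hh using Algebra.adjoin_induction with
  | mem x hx =>
    rcases hx with ⟨i, rfl⟩ | ⟨i, rfl⟩
    · refine ⟨_, (sosFn n).mul_mem h4 (sqAbs_mem (MvPolynomial.X i + MvPolynomial.C 1)),
        _, (sosFn n).mul_mem h4 (sqAbs_mem (MvPolynomial.X i - MvPolynomial.C 1)), ?_⟩
      ext z
      simp [sqAbs, Complex.normSq_apply]
      ring
    · refine ⟨_, (sosFn n).mul_mem h4 (sqAbs_mem (MvPolynomial.X i + MvPolynomial.C Complex.I)),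
        _, (sosFn n).mul_mem h4 (sqAbs_mem (MvPolynomial.X i - MvPolynomial.C Complex.I)), ?_⟩
      ext z
      simp [sqAbs, Complex.normSq_apply]
      ring
  | algebraMap c =>
    refine ⟨_, const_mem_sosFn (abs_nonneg c), _,
      const_mem_sosFn (sub_nonneg.2 (le_abs_self c)), ?_⟩
    rw [← map_sub]; simp
  | add x y _ _ ihx ihy =>
    obtain ⟨s, hs, t, ht, rfl⟩ := ihx
    obtain ⟨s', hs', t', ht', rfl⟩ := ihy
    exact ⟨_, add_mem hs hs', _, add_mem ht ht', by ring⟩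
  | mul x y _ _ ihx ihy =>
    obtain ⟨s, hs, t, ht, rfl⟩ := ihx
    obtain ⟨s', hs', t', ht', rfl⟩ := ihy
    exact ⟨_, add_mem (mul_mem hs hs') (mul_mem ht ht'), _,
      add_mem (mul_mem hs ht') (mul_mem ht hs'), by ring⟩

/-! ### The module of weighted Hermitian sums of squares -/

/-- The module over the semiring of Hermitian sums of squares generated by `1` and the
functions `G i`. -/
noncomputable def hermModule {n m : ℕ} (G : Fin m → (Fin n → ℂ) → ℝ) :
    Submodule (sosFn n) ((Fin n → ℂ) → ℝ) where
  carrier := {h | ∃ σ0 ∈ sosFn n, ∃ σ : Fin m → (Fin n → ℂ) → ℝ, (∀ i, σ i ∈ sosFn n) ∧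
    h = σ0 + ∑ i, σ i * G i}
  zero_mem' := ⟨0, zero_mem _, 0, fun _ => zero_mem _, by simp⟩
  add_mem' := by
    rintro _ _ ⟨σ0, h0, σ, h, rfl⟩ ⟨τ0, h0', τ, h', rfl⟩
    refine ⟨_, add_mem h0 h0', σ + τ, fun i => add_mem (h i) (h' i), ?_⟩
    simp only [Pi.add_apply, add_mul, Finset.sum_add_distrib]
    ring
  smul_mem' := by
    rintro ⟨s, hs⟩ _ ⟨σ0, h0, σ, h, rfl⟩
    refine ⟨_, mul_mem hs h0, fun i => s * σ i, fun i => mul_mem hs (h i), ?_⟩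
    simp only [mul_assoc, ← Finset.mul_sum, ← mul_add]
    rfl

section Module

variable {n m : ℕ} {G : Fin m → (Fin n → ℂ) → ℝ}

lemma mul_mem_hermModule {s h : (Fin n → ℂ) → ℝ} (hs : s ∈ sosFn n) (hh : h ∈ hermModule G) :
    s * h ∈ hermModule G :=
  (hermModule G).smul_mem ⟨s, hs⟩ hh

lemma sosFn_le_hermModule {s : (Fin n → ℂ) → ℝ} (hs : s ∈ sosFn n) : s ∈ hermModule G :=
  ⟨s, hs, 0, fun _ => zero_mem _, by simp⟩

lemma gen_mem_hermModule (i : Fin m) : G i ∈ hermModule G := by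
  classical
  refine ⟨0, zero_mem _, Pi.single i 1, fun j => ?_, ?_⟩
  · by_cases h : j = i
    · subst h; simp
    · simp [h]
  · rw [Finset.sum_eq_single i] <;> simp +contextual

lemma hermModule_le_polyFn (hG : ∀ i, G i ∈ polyFn n) {h : (Fin n → ℂ) → ℝ}
    (hh : h ∈ hermModule G) : h ∈ polyFn n := by
  obtain ⟨σ0, h0, σ, hσ, rfl⟩ := hh
  exact add_mem (sosFn_le_polyFn h0)
    (sum_mem fun i _ => mul_mem (sosFn_le_polyFn (hσ i)) (hG i))

lemma sphere_mul_mem_hermModule {u h : (Fin n → ℂ) → ℝ}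
    (hu : u ∈ hermModule G) (hu' : -u ∈ hermModule G) (hh : h ∈ polyFn n) :
    u * h ∈ hermModule G := by
  obtain ⟨s, hs, t, ht, rfl⟩ := exists_sub_of_mem_polyFn hh
  have := add_mem (mul_mem_hermModule hs hu) (mul_mem_hermModule ht hu')
  convert this using 1
  ring

/-- Every Hermitian square is bounded by a constant `N`, in the strong sense that multiplication
by `N - t` preserves the module. On the coordinates this is the sphere equation
`R² - |zᵢ|² = ∑_{j ≠ i} |zⱼ|²`; the bound is then propagated along sums and products. -/
lemma exists_bound {u : (Fin n → ℂ) → ℝ} {R : ℝ}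
    (hG : ∀ i, G i ∈ polyFn n)
    (hu : u ∈ hermModule G) (hu' : -u ∈ hermModule G)
    (huR : u = algebraMap ℝ _ (R ^ 2) - ∑ l, sqAbs n (MvPolynomial.X l))
    {t : (Fin n → ℂ) → ℝ} (ht : t ∈ sosFn n) :
    ∃ N : ℝ, 0 ≤ N ∧ ∀ h ∈ hermModule G, (algebraMap ℝ _ N - t) * h ∈ hermModule G := by
  have hsq : ∀ P, ∃ N : ℝ, 0 ≤ N ∧
      ∀ h ∈ hermModule G, (algebraMap ℝ _ N - sqAbs n P) * h ∈ hermModule G := by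
    intro P
    induction P using MvPolynomial.induction_on with
    | C c =>
      refine ⟨Complex.normSq c, Complex.normSq_nonneg c, fun h _ => ?_⟩
      have : algebraMap ℝ ((Fin n → ℂ) → ℝ) (Complex.normSq c) - sqAbs n (MvPolynomial.C c) = 0 := by
        ext z; simp [sqAbs]
      rw [this, zero_mul]
      exact zero_mem _
    | add P Q hP hQ =>
      obtain ⟨N, hN, hP⟩ := hP
      obtain ⟨N', hN', hQ⟩ := hQ
      refine ⟨2 * N + 2 * N', by positivity, fun h hh => ?_⟩
      have e2 : algebraMap ℝ ((Fin n → ℂ) → ℝ) 2 ∈ sosFn n := const_mem_sosFn (by norm_num)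
      have := add_mem (add_mem (mul_mem_hermModule e2 (hP h hh)) (mul_mem_hermModule e2 (hQ h hh)))
        (mul_mem_hermModule (sqAbs_mem (P - Q)) hh)
      convert this using 1
      -- The parallelogram law `|P + Q|² + |P - Q|² = 2|P|² + 2|Q|²`.
      ext z
      simp [sqAbs, Complex.normSq_apply]
      ring
    | mul_X P i hP =>
      obtain ⟨N, hN, hP⟩ := hP
      refine ⟨N * R ^ 2, by positivity, fun h hh => ?_⟩
      have hX : (algebraMap ℝ _ (R ^ 2) - sqAbs n (MvPolynomial.X i)) * h ∈ hermModule G := by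
        have hrest : ∑ l ∈ Finset.univ.erase i, sqAbs n (MvPolynomial.X l) ∈ sosFn n :=
          sum_mem fun l _ => sqAbs_mem _
        have := add_mem (sphere_mul_mem_hermModule hu hu' (hermModule_le_polyFn hG hh))
          (mul_mem_hermModule hrest hh)
        convert this using 1
        rw [huR, ← Finset.add_sum_erase _ _ (Finset.mem_univ i)]
        ring
      have := add_mem (mul_mem_hermModule (const_mem_sosFn hN) hX)
        (mul_mem_hermModule (sqAbs_mem (MvPolynomial.X i)) (hP h hh))
      convert this using 1
      rw [map_mul, map_mul]
      ring
  induction ht using sosFn_induction with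
  | sq P => exact hsq P
  | zero => exact ⟨0, le_rfl, fun h _ => by simp⟩
  | add s t _ _ ihs iht =>
    obtain ⟨N, hN, hs⟩ := ihs
    obtain ⟨N', hN', ht⟩ := iht
    refine ⟨N + N', by positivity, fun h hh => ?_⟩
    convert add_mem (hs h hh) (ht h hh) using 1
    rw [map_add]
    ring

/-- Characters of the algebra of polynomial functions are evaluations at points. -/
lemma exists_eval_of_algHom (φ : polyFn n →ₐ[ℝ] ℝ) :
    ∃ w : Fin n → ℂ, ∀ h : polyFn n, φ h = (h : (Fin n → ℂ) → ℝ) w := by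
  let w : Fin n → ℂ := fun i =>
    ⟨φ ⟨_, (coord_mem_cpolyFn i).1⟩, φ ⟨_, (coord_mem_cpolyFn i).2⟩⟩
  refine ⟨w, fun h => ?_⟩
  have : φ = (Pi.evalAlgHom ℝ (fun _ : Fin n → ℂ => ℝ) w).comp (polyFn n).val := by
    apply AlgHom.adjoin_ext
    rintro _ (⟨i, rfl⟩ | ⟨i, rfl⟩) <;> rfl
  rw [this]
  rfl

lemma mem_hermModule_of_pos {u : (Fin n → ℂ) → ℝ} {R : ℝ}
    (hG : ∀ i, G i ∈ polyFn n)
    (hu : u ∈ hermModule G) (hu' : -u ∈ hermModule G)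
    (huR : u = algebraMap ℝ _ (R ^ 2) - ∑ l, sqAbs n (MvPolynomial.X l))
    {F : (Fin n → ℂ) → ℝ} (hF : F ∈ polyFn n)
    (hpos : ∀ z, (∀ i, 0 ≤ G i z) → 0 < F z) : F ∈ hermModule G := by
  let M : PointedCone ℝ (polyFn n) :=
    { carrier := {a | (a : (Fin n → ℂ) → ℝ) ∈ hermModule G}
      zero_mem' := zero_mem (hermModule G)
      add_mem' := fun ha hb => add_mem (S := Submodule _ _) (s := hermModule G) ha hb
      smul_mem' := by
        rintro ⟨c, hc⟩ a ha
        have := mul_mem_hermModule (const_mem_sosFn hc) ha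
        rwa [← Algebra.smul_def] at this }
  have h1 : (1 : (Fin n → ℂ) → ℝ) ∈ hermModule G := sosFn_le_hermModule (one_mem _)
  refine mem_of_forall_algHom_pos M {a | (a : (Fin n → ℂ) → ℝ) ∈ sosFn n} (a := ⟨F, hF⟩)
    h1 ?_ ?_ ?_ ?_ ?_
  · intro t ht x hx
    exact mul_mem_hermModule ht hx
  · rintro ⟨a, ha⟩
    obtain ⟨s, hs, t, ht, rfl⟩ := exists_sub_of_mem_polyFn ha
    obtain ⟨N, -, hN⟩ := exists_bound hG hu hu' huR hs
    refine ⟨N, ?_⟩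
    have := add_mem (hN 1 h1) (sosFn_le_hermModule ht)
    change algebraMap ℝ ((Fin n → ℂ) → ℝ) N - (s - t) ∈ hermModule G
    convert this using 1
    ring
  · rintro ⟨a, ha⟩
    obtain ⟨s, hs, t, ht, rfl⟩ := exists_sub_of_mem_polyFn ha
    exact ⟨⟨s, sosFn_le_polyFn hs⟩, hs, ⟨t, sosFn_le_polyFn ht⟩, ht, rfl⟩
  · intro t ht
    obtain ⟨N, -, hN⟩ := exists_bound hG hu hu' huR ht
    exact ⟨N, fun x hx => hN x hx⟩
  · intro φ hφ
    obtain ⟨w, hw⟩ := exists_eval_of_algHom φ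
    rw [hw]
    refine hpos w fun i => ?_
    have := hφ ⟨G i, hG i⟩ (gen_mem_hermModule i)
    rwa [hw] at this

end Module

/-! ### The Positivstellensatz on the sphere -/

/-- D'Angelo–Putinar Positivstellensatz. -/
theorem stmt0 {n m : ℕ} (g : Fin m → Coef n)
    (hgH : ∀ i, HermSym (g i)) (hgF : ∀ i, FinSupp (g i))
    (R : ℝ) (hR : 0 < R) (i0 i1 : Fin m)
    (hballLo : ∀ z : Fin n → ℂ,
      evalC (g i0) z = (R : ℂ)^2 - ∑ l, z l * conj (z l))
    (hballHi : ∀ z : Fin n → ℂ,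
      evalC (g i1) z = (∑ l, z l * conj (z l)) - (R : ℂ)^2)
    (f : Coef n) (hfH : HermSym f) (hfF : FinSupp f)
    (hpos : ∀ z : Fin n → ℂ, (∀ i, 0 ≤ (evalC (g i) z).re) → 0 < (evalC f z).re) :
    ∃ (σ0 : (Fin n → ℂ) → ℝ) (σ : Fin m → (Fin n → ℂ) → ℝ),
      IsHermSOS σ0 ∧ (∀ i, IsHermSOS (σ i)) ∧
      ∀ z : Fin n → ℂ,
        (evalC f z).re = σ0 z + ∑ i, σ i z * (evalC (g i) z).re := by
  have hu0 : (fun z => (evalC (g i0) z).re) =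
      algebraMap ℝ _ (R ^ 2) - ∑ l, sqAbs n (MvPolynomial.X l) := by
    ext z
    rw [hballLo]
    simp [sqAbs, Complex.mul_conj, ← Complex.ofReal_pow]
  have hu1 : (fun z => (evalC (g i1) z).re) = -(fun z => (evalC (g i0) z).re) := by
    ext z
    simp only [Pi.neg_apply]
    rw [hballLo, hballHi, ← Complex.neg_re, neg_sub]
  obtain ⟨σ0, h0, σ, hσ, heq⟩ := mem_hermModule_of_pos
    (G := fun i z => (evalC (g i) z).re) (fun i => evalC_re_mem_polyFn (hgF i))
    (gen_mem_hermModule i0) (hu1 ▸ gen_mem_hermModule (G := fun i z => (evalC (g i) z).re) i1)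
    hu0 (evalC_re_mem_polyFn hfF) hpos
  refine ⟨σ0, σ, isHermSOS_of_mem h0, fun i => isHermSOS_of_mem (hσ i), fun z => ?_⟩
  simpa using congrFun heq z

end Stmt
end

section
/- Let g₁,…,g_m be real-valued complex polynomials in n complex variables of degrees k₁,…,k_m and K := {z ∈ ℂⁿ : gᵢ(z,z̄) ≥ 0, i = 1,…,m}. Assume that for some R > 0 both R² − (|z₁|²+…+|zₙ|²) and (|z₁|²+…+|zₙ|²) − R² occur among g₁,…,g_m. Let (y_{α,β})_{α,β∈ℕⁿ} be complex numbers with y_{β,α} = conj(y_{α,β}). Then the following are equivalent: (1) there exists a positive Borel measure μ supported on K such that y_{α,β} = ∫ z^α z̄^β dμ for all α, β ∈ ℕⁿ; (2) for every d ≥ max{k₁,…,k_m}, the moment matrix M_d(y) is positive semidefinite and the localizing matrices M_{d−kᵢ}(gᵢ y) are positive semidefinite for i = 1,…,m. -/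
/-!
Integrating `gᵢ |p|²` against a measure on `K` gives the positivity conditions. Conversely, read `y`
as a linear functional `L` on polynomials in `z, z̄`, nonnegative on Hermitian squares `|p(z)|²` and
on `gᵢ |p(z)|²`. The sphere constraints make `L` vanish on multiples of `R² - ∑ |z_l|²`, bounding every
moment by the total mass `L(1)` (`Adm.norm_le`). Hence the normalized functionals of this kind form
a compact convex set of arrays (`isCompact_states`, `convex_states`).

Products of Hermitian squares are Hermitian squares, so `L(|1 + c z_l|² ·)` is again of this kind;
on the sphere so is `L((2 + 2R² - |1 + c z_l|²) ·)` for `|c| = 1`. Therefore an extreme `L` is an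
eigenvector of multiplication by each `|1 + c z_l|²` (`twist_of_extreme`), by polarization also of
multiplication by `z_l`, and so it is evaluation at a point of `K` (`extreme_eq_eval`).

By Krein–Milman every normalized functional is a limit of convex combinations of evaluations at
points of `K`. The moment arrays of probability measures on the compact set `K` form a compact
convex set (compactness of the space of probability measures), which contains the evaluations and
so contains `y / L(1)` (`states_subset`). If `L(1) = 0` then `y = 0` and the zero measure works.
-/

open scoped BigOperators ComplexConjugate ComplexOrder
open MeasureTheory

namespace Stmt

/-! ### Positive definite kernels on multi-indices -/

/-- The `l`-th unit multi-index. -/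
def unitIdx {n : ℕ} (l : Fin n) : Fin n → ℕ := Pi.single l 1

/-- Positive semidefiniteness of an infinite moment array, tested on arbitrary finite families of
multi-indices, repetitions allowed. Since `0 ≤ ·` on `ℂ` forces the form to be real, this includes
Hermitian symmetry. -/
def PD {n : ℕ} (K : Coef n) : Prop :=
  ∀ (ι : Type) [Fintype ι] (v : ι → (Fin n → ℕ)) (x : ι → ℂ),
    0 ≤ ∑ i, ∑ j, conj (x i) * K (v i) (v j) * x j

/-- The array of the functional `p ↦ L(|c₀ + c₁ z_l|² p)`, when `K` is the array of `L`. -/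
def twist {n : ℕ} (c₀ c₁ : ℂ) (l : Fin n) (K : Coef n) : Coef n := fun a b =>
  c₀ * conj c₀ * K a b + c₁ * conj c₀ * K (a + unitIdx l) b
    + c₀ * conj c₁ * K a (b + unitIdx l) + c₁ * conj c₁ * K (a + unitIdx l) (b + unitIdx l)

lemma PD.add {n : ℕ} {K L : Coef n} (hK : PD K) (hL : PD L) : PD (K + L) := by
  intro ι _ v x
  have := add_nonneg (hK ι v x) (hL ι v x)
  simpa [mul_add, add_mul, Finset.sum_add_distrib] using this

lemma PD.smul {n : ℕ} {K : Coef n} (hK : PD K) {r : ℝ} (hr : 0 ≤ r) : PD (r • K) := by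
  intro ι _ v x
  have := mul_nonneg (Complex.zero_le_real.2 hr) (hK ι v x)
  rw [Finset.mul_sum] at this
  convert this using 2 with i
  rw [Finset.mul_sum]
  refine Finset.sum_congr rfl fun j _ => ?_
  simp only [Pi.smul_apply, Complex.real_smul]
  ring

/-- `|c₀ + c₁ z_l|² |p|² = |(c₀ + c₁ z_l) p|²`: the twisted form at a family is the original form
at the doubled family consisting of the multi-indices and their shifts. -/
lemma PD.twist {n : ℕ} {K : Coef n} (hK : PD K) (c₀ c₁ : ℂ) (l : Fin n) :
    PD (twist c₀ c₁ l K) := by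
  intro ι _ v x
  have := hK (ι ⊕ ι) (Sum.elim v fun i => v i + unitIdx l)
    (Sum.elim (fun i => conj c₀ * x i) fun i => conj c₁ * x i)
  convert this using 1
  simp only [Fintype.sum_sum_type, Sum.elim_inl, Sum.elim_inr, ← Finset.sum_add_distrib]
  refine Finset.sum_congr rfl fun i _ => Finset.sum_congr rfl fun j _ => ?_
  simp only [Stmt.twist, map_mul, Complex.conj_conj]
  ring

lemma PD.diag {n : ℕ} {K : Coef n} (hK : PD K) (a : Fin n → ℕ) : 0 ≤ K a a := by
  simpa using hK Unit (fun _ => a) (fun _ => 1)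

lemma PD.two {n : ℕ} {K : Coef n} (hK : PD K) (a b : Fin n → ℕ) (c : ℂ) (hc : c * conj c = 1) :
    0 ≤ K a a + K b b + c * K a b + conj c * K b a := by
  have := hK (Fin 2) ![a, b] ![1, c]
  simp [Fin.sum_univ_two] at this
  convert this using 1
  linear_combination (-K b b) * hc

lemma PD.herm {n : ℕ} {K : Coef n} (hK : PD K) : HermSym K := by
  intro a b
  have h1 := (Complex.le_def.1 (hK.two a b 1 (by simp))).2
  have h2 := (Complex.le_def.1 (hK.two a b Complex.I (by simp))).2
  have ha := (Complex.le_def.1 (hK.diag a)).2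
  have hb := (Complex.le_def.1 (hK.diag b)).2
  simp at h1 h2 ha hb
  apply Complex.ext <;> simp <;> linarith

lemma PD.norm_le {n : ℕ} {K : Coef n} (hK : PD K) (a b : Fin n → ℕ) :
    ‖K a b‖ ≤ (K a a).re + (K b b).re := by
  have hh := hK.herm a b
  have hre := congrArg Complex.re hh
  have him := congrArg Complex.im hh
  have h1 := (Complex.le_def.1 (hK.two a b 1 (by simp))).1
  have h2 := (Complex.le_def.1 (hK.two a b Complex.I (by simp))).1
  have h3 := (Complex.le_def.1 (hK.two a b (-1) (by simp))).1
  have h4 := (Complex.le_def.1 (hK.two a b (-Complex.I) (by simp))).1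
  simp at h1 h2 h3 h4 hre him
  refine (Complex.norm_le_abs_re_add_abs_im _).trans ?_
  have : |(K a b).re| ≤ ((K a a).re + (K b b).re) / 2 := abs_le.2 ⟨by linarith, by linarith⟩
  have : |(K a b).im| ≤ ((K a a).re + (K b b).re) / 2 := abs_le.2 ⟨by linarith, by linarith⟩
  linarith

lemma mdeg_add {n : ℕ} (a b : Fin n → ℕ) : mdeg (a + b) = mdeg a + mdeg b := by
  simp [mdeg, Finset.sum_add_distrib]

lemma mdeg_unitIdx {n : ℕ} (l : Fin n) : mdeg (unitIdx l) = 1 := by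
  simp [mdeg, unitIdx]

lemma mpow_add {n : ℕ} (z : Fin n → ℂ) (a b : Fin n → ℕ) :
    mpow z (a + b) = mpow z a * mpow z b := by
  simp [mpow, pow_add, Finset.prod_mul_distrib]

lemma mpow_unitIdx {n : ℕ} (z : Fin n → ℂ) (l : Fin n) : mpow z (unitIdx l) = z l := by
  rw [mpow, Finset.prod_eq_single l]
  · simp [unitIdx]
  · intro b _ hb; simp [unitIdx, hb]
  · simp

lemma mpow_zero {n : ℕ} (z : Fin n → ℂ) : mpow z 0 = 1 := by simp [mpow]

lemma mpow_conj {n : ℕ} (z : Fin n → ℂ) (a : Fin n → ℕ) :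
    mpow (fun l => conj (z l)) a = conj (mpow z a) := by
  simp [mpow]

lemma idx_induction {n : ℕ} {P : (Fin n → ℕ) → Prop} (h0 : P 0)
    (h1 : ∀ a l, P a → P (a + unitIdx l)) (a : Fin n → ℕ) : P a := by
  induction hd : mdeg a generalizing a with
  | zero =>
    have : a = 0 := by
      funext i
      have := comp_le_mdeg a i
      simp only [Pi.zero_apply]
      omega
    exact this ▸ h0
  | succ d ih =>
    obtain ⟨l, hl⟩ : ∃ l, a l ≠ 0 := by
      by_contra! h
      simp [mdeg, h] at hd
    have hle : unitIdx l ≤ a := by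
      intro i
      by_cases hi : i = l
      · subst hi; simp [unitIdx]; omega
      · simp [unitIdx, hi]
    have hs : a - unitIdx l + unitIdx l = a := tsub_add_cancel_of_le hle
    rw [← hs]
    refine h1 _ _ (ih _ ?_)
    have := congrArg mdeg hs
    rw [mdeg_add, mdeg_unitIdx] at this
    omega

/-! ### The cone of admissible moment arrays -/

/-- The array of `p ↦ L(c p)`, when `y` is the array of `L`. -/
noncomputable def loc {n : ℕ} (c y : Coef n) : Coef n := fun a b =>
  ∑ᶠ p : (Fin n → ℕ) × (Fin n → ℕ), c p.1 p.2 * y (a + p.1) (b + p.2)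

lemma DegLE.finSupp {n k : ℕ} {c : Coef n} (h : DegLE c k) : FinSupp c := by
  have hf : {a : Fin n → ℕ | mdeg a ≤ k}.Finite :=
    Set.finite_coe_iff.1 (inferInstanceAs (Finite (Idx n k)))
  exact (hf.prod hf).subset fun p hp => h p.1 p.2 hp

/-- The finite set of exponent pairs with nonzero coefficient. -/
noncomputable def FinSupp.supp {n : ℕ} {c : Coef n} (hc : FinSupp c) :
    Finset ((Fin n → ℕ) × (Fin n → ℕ)) :=
  Set.Finite.toFinset hc

lemma loc_eq_sum {n : ℕ} {c : Coef n} (hc : FinSupp c) (y : Coef n) (a b : Fin n → ℕ) :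
    loc c y a b = ∑ p ∈ hc.supp, c p.1 p.2 * y (a + p.1) (b + p.2) := by
  refine finsum_eq_sum_of_support_subset _ fun p hp => ?_
  exact (Set.Finite.mem_toFinset hc).2 (left_ne_zero_of_mul hp)

lemma evalC_eq_sum {n : ℕ} {c : Coef n} (hc : FinSupp c) (z : Fin n → ℂ) :
    evalC c z = ∑ p ∈ hc.supp,
      c p.1 p.2 * mpow z p.1 * mpow (fun i => conj (z i)) p.2 := by
  refine finsum_eq_sum_of_support_subset _ fun p hp => ?_
  exact (Set.Finite.mem_toFinset hc).2 (left_ne_zero_of_mul (left_ne_zero_of_mul hp))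

lemma loc_add {n : ℕ} {c : Coef n} (hc : FinSupp c) (K L : Coef n) :
    loc c (K + L) = loc c K + loc c L := by
  funext a b
  simp [loc_eq_sum hc, mul_add, Finset.sum_add_distrib]

lemma loc_smul {n : ℕ} {c : Coef n} (hc : FinSupp c) (r : ℝ) (K : Coef n) :
    loc c (r • K) = r • loc c K := by
  funext a b
  simp only [loc_eq_sum hc, Pi.smul_apply, Finset.smul_sum, Complex.real_smul]
  refine Finset.sum_congr rfl fun p _ => ?_
  ring

lemma loc_twist {n : ℕ} {c : Coef n} (hc : FinSupp c) (c₀ c₁ : ℂ) (l : Fin n) (K : Coef n) :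
    loc c (twist c₀ c₁ l K) = twist c₀ c₁ l (loc c K) := by
  funext a b
  simp only [loc_eq_sum hc, twist, Finset.mul_sum, ← Finset.sum_add_distrib]
  refine Finset.sum_congr rfl fun p _ => ?_
  simp only [add_right_comm _ (unitIdx l)]
  ring

/-- Moment arrays whose functional is nonnegative on Hermitian squares and on Hermitian squares
times a constraint, and which annihilate the multiples of `R² - ∑ |z_l|²`. -/
structure Adm {n m : ℕ} (g : Fin m → Coef n) (R : ℝ) (y : Coef n) : Prop where
  pd : PD y
  loc_pd : ∀ i, PD (loc (g i) y)
  sph : ∀ a b, (R : ℂ) ^ 2 * y a b = ∑ l, y (a + unitIdx l) (b + unitIdx l)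

section Cone
variable {n m : ℕ} {g : Fin m → Coef n} {R : ℝ} {y K L : Coef n}

lemma Adm.add (hg : ∀ i, FinSupp (g i)) (hK : Adm g R K) (hL : Adm g R L) : Adm g R (K + L) where
  pd := hK.pd.add hL.pd
  loc_pd i := by rw [loc_add (hg i)]; exact (hK.loc_pd i).add (hL.loc_pd i)
  sph a b := by simp [mul_add, Finset.sum_add_distrib, hK.sph, hL.sph]

lemma Adm.smul (hg : ∀ i, FinSupp (g i)) (hK : Adm g R K) {r : ℝ} (hr : 0 ≤ r) :
    Adm g R (r • K) where
  pd := hK.pd.smul hr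
  loc_pd i := by rw [loc_smul (hg i)]; exact (hK.loc_pd i).smul hr
  sph a b := by
    have := hK.sph a b
    simp only [Pi.smul_apply, Complex.real_smul, ← Finset.mul_sum, ← this]
    ring

lemma Adm.twist (hg : ∀ i, FinSupp (g i)) (hK : Adm g R K) (c₀ c₁ : ℂ) (l : Fin n) :
    Adm g R (twist c₀ c₁ l K) where
  pd := hK.pd.twist _ _ _
  loc_pd i := by rw [loc_twist (hg i)]; exact (hK.loc_pd i).twist _ _ _
  sph a b := by
    simp only [Stmt.twist, Finset.sum_add_distrib, ← Finset.mul_sum,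
      add_right_comm _ _ (unitIdx l), ← hK.sph]
    ring

lemma Adm.sum (hg : ∀ i, FinSupp (g i)) {ι : Type} (s : Finset ι) (F : ι → Coef n)
    (h0 : Adm g R 0) (hF : ∀ i ∈ s, Adm g R (F i)) : Adm g R (∑ i ∈ s, F i) :=
  Finset.sum_induction _ _ (fun _ _ h1 h2 => h1.add hg h2) h0 hF

lemma Adm.diag_le (h : Adm g R y) (a : Fin n → ℕ) :
    (y a a).re ≤ (R ^ 2) ^ mdeg a * (y 0 0).re := by
  induction a using idx_induction with
  | h0 => simp [mdeg]
  | h1 a l ih =>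
    have h1 := congrArg Complex.re (h.sph a a)
    have h2 : (y (a + unitIdx l) (a + unitIdx l)).re ≤ R ^ 2 * (y a a).re := by
      rw [← Complex.ofReal_pow, Complex.re_ofReal_mul, Complex.re_sum] at h1
      rw [h1]
      exact Finset.single_le_sum
        (f := fun l => (y (a + unitIdx l) (a + unitIdx l)).re)
        (fun _ _ => (Complex.le_def.1 (h.pd.diag _)).1) (Finset.mem_univ l)
    rw [mdeg_add, mdeg_unitIdx, pow_succ]
    have := mul_le_mul_of_nonneg_left ih (sq_nonneg R)
    nlinarith

/-- Archimedean bound: every moment is controlled by the total mass. -/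
lemma Adm.norm_le (h : Adm g R y) (a b : Fin n → ℕ) :
    ‖y a b‖ ≤ ((R ^ 2) ^ mdeg a + (R ^ 2) ^ mdeg b) * (y 0 0).re := by
  have := h.pd.norm_le a b
  have := h.diag_le a
  have := h.diag_le b
  linarith

lemma Adm.eq_zero (h : Adm g R y) (h0 : (y 0 0).re = 0) : y = 0 := by
  funext a b
  have := h.norm_le a b
  rw [h0, mul_zero] at this
  simpa using this

lemma Adm.mass_nonneg (h : Adm g R y) : 0 ≤ (y 0 0).re := (Complex.le_def.1 (h.pd.diag 0)).1

lemma Adm.mass_eq (h : Adm g R y) : y 0 0 = ((y 0 0).re : ℂ) := by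
  have := (Complex.le_def.1 (h.pd.diag 0)).2
  apply Complex.ext <;> simp at this ⊢
  exact this.symm

end Cone

/-! ### Coefficients are determined by values -/

/-- The linear functional on polynomials in `z` (variables `inl`) and `z̄` (variables `inr`)
sending `z^u z̄^v` to `y (a + u) (b + v)`. -/
noncomputable def momFun {n : ℕ} (y : Coef n) (a b : Fin n → ℕ) :
    MvPolynomial (Fin n ⊕ Fin n) ℂ →ₗ[ℂ] ℂ :=
  (MvPolynomial.basisMonomials _ ℂ).constr ℂ
    fun s => y (a + fun i => s (Sum.inl i)) (b + fun i => s (Sum.inr i))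

lemma momFun_monomial {n : ℕ} (y : Coef n) (a b : Fin n → ℕ) (s : (Fin n ⊕ Fin n) →₀ ℕ) (c : ℂ) :
    momFun y a b (MvPolynomial.monomial s c) =
      c * y (a + fun i => s (Sum.inl i)) (b + fun i => s (Sum.inr i)) := by
  have : MvPolynomial.monomial s c = c • (MvPolynomial.basisMonomials _ ℂ s) := by
    simp [MvPolynomial.smul_monomial]
  rw [this, map_smul, momFun, Module.Basis.constr_basis, smul_eq_mul]

/-- The exponent of `z^a z̄^b`. -/
noncomputable def pairExp {n : ℕ} (a b : Fin n → ℕ) : (Fin n ⊕ Fin n) →₀ ℕ :=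
  Finsupp.equivFunOnFinite.symm (Sum.elim a b)

lemma momFun_pairExp {n : ℕ} (y : Coef n) (a b u v : Fin n → ℕ) (c : ℂ) :
    momFun y a b (MvPolynomial.monomial (pairExp u v) c) = c * y (a + u) (b + v) := by
  rw [momFun_monomial]; rfl

lemma eval_pairExp {n : ℕ} (z w : Fin n → ℂ) (u v : Fin n → ℕ) (c : ℂ) :
    MvPolynomial.eval (Sum.elim z w) (MvPolynomial.monomial (pairExp u v) c) =
      c * mpow z u * mpow w v := by
  rw [MvPolynomial.eval_monomial, Finsupp.prod_fintype _ _ (by simp), Fintype.prod_sum_type]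
  simp [pairExp, mpow, mul_assoc]

/-- A polynomial in `z, z̄` vanishing for all `z` is zero: substitute `z = s + i t`,
`z̄ = s - i t`; the resulting polynomial vanishes for real `s, t`, hence identically, and the
substitution is invertible. -/
lemma poly_eq_zero {n : ℕ} (P : MvPolynomial (Fin n ⊕ Fin n) ℂ)
    (h : ∀ z : Fin n → ℂ, MvPolynomial.eval (Sum.elim z fun l => conj (z l)) P = 0) : P = 0 := by
  let σ : Fin n ⊕ Fin n → MvPolynomial (Fin n ⊕ Fin n) ℂ :=
    Sum.elim (fun l => .X (.inl l) + .C Complex.I * .X (.inr l))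
      (fun l => .X (.inl l) - .C Complex.I * .X (.inr l))
  have hev (x : Fin n ⊕ Fin n → ℂ) : MvPolynomial.eval x (MvPolynomial.bind₁ σ P) =
      MvPolynomial.eval (Sum.elim (fun l => x (.inl l) + Complex.I * x (.inr l))
        (fun l => x (.inl l) - Complex.I * x (.inr l))) P := by
    simp only [MvPolynomial.eval, MvPolynomial.eval₂Hom_bind₁]
    congr 2
    funext s
    rcases s with s | s <;> simp [σ]
  have hQ : MvPolynomial.bind₁ σ P = 0 := by
    refine MvPolynomial.funext_set (fun _ => Set.range ((↑) : ℝ → ℂ))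
      (fun _ => Set.infinite_range_of_injective Complex.ofReal_injective) fun x hx => ?_
    choose r hr using fun s => hx s (Set.mem_univ s)
    rw [hev, map_zero, ← h fun l => x (.inl l) + Complex.I * x (.inr l)]
    congr 2
    funext s
    rcases s with s | s
    · simp
    · simp [← hr, sub_eq_add_neg]
  refine MvPolynomial.funext fun x => ?_
  have := hev (Sum.elim (fun l => (x (.inl l) + x (.inr l)) / 2)
    (fun l => (x (.inl l) - x (.inr l)) / (2 * Complex.I)))
  rw [hQ, map_zero] at this
  rw [map_zero, this]
  congr 2
  funext s
  rcases s with s | s <;> simp <;> field_simp <;> ring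

/-- The localizing array of a polynomial depends only on its values. -/
lemma loc_eq_momFun {n : ℕ} {c : Coef n} (hc : FinSupp c) (P : MvPolynomial (Fin n ⊕ Fin n) ℂ)
    (h : ∀ z : Fin n → ℂ,
      evalC c z = MvPolynomial.eval (Sum.elim z fun l => conj (z l)) P)
    (y : Coef n) (a b : Fin n → ℕ) : loc c y a b = momFun y a b P := by
  have : ∑ p ∈ hc.supp, MvPolynomial.monomial (pairExp p.1 p.2) (c p.1 p.2) = P := by
    rw [← sub_eq_zero]
    refine poly_eq_zero _ fun z => ?_
    rw [map_sub, map_sum, ← h, evalC_eq_sum hc, sub_eq_zero]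
    exact Finset.sum_congr rfl fun p _ => eval_pairExp _ _ _ _ _
  rw [← this, map_sum, loc_eq_sum hc]
  exact Finset.sum_congr rfl fun p _ => (momFun_pairExp _ _ _ _ _ _).symm

lemma loc_sphere {n : ℕ} {c : Coef n} (hc : FinSupp c) (R : ℝ) (ε : ℂ)
    (h : ∀ z : Fin n → ℂ, evalC c z = ε * ((R : ℂ) ^ 2 - ∑ l, z l * conj (z l)))
    (y : Coef n) (a b : Fin n → ℕ) :
    loc c y a b =
      ε * ((R : ℂ) ^ 2 * y a b - ∑ l, y (a + unitIdx l) (b + unitIdx l)) := by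
  rw [loc_eq_momFun hc (.monomial (pairExp 0 0) (ε * (R : ℂ) ^ 2) -
    ∑ l, .monomial (pairExp (unitIdx l) (unitIdx l)) ε)]
  · simp only [map_sub, map_sum, momFun_pairExp, add_zero, ← Finset.mul_sum]
    ring
  · intro z
    simp only [map_sub, map_sum, eval_pairExp, mpow_zero, mpow_unitIdx, h, mul_assoc,
      ← Finset.mul_sum]
    ring

/-! ### Extreme points are point evaluations -/

/-- The normalized admissible moment arrays. -/
def states {n m : ℕ} (g : Fin m → Coef n) (R : ℝ) : Set (Coef n) :=
  {y | Adm g R y ∧ y 0 0 = 1}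

section States
variable {n m : ℕ} {g : Fin m → Coef n} {R : ℝ} {y K L : Coef n}

lemma convex_states (hg : ∀ i, FinSupp (g i)) : Convex ℝ (states g R) := by
  rintro x ⟨hx, hx0⟩ y ⟨hy, hy0⟩ s t hs ht hst
  refine ⟨(hx.smul hg hs).add hg (hy.smul hg ht), ?_⟩
  have : (s : ℂ) + t = 1 := by exact_mod_cast hst
  simpa [hx0, hy0] using this

lemma isClosed_PD : IsClosed {K : Coef n | PD K} := by
  simp only [PD, Set.ofPred_forall]
  refine isClosed_iInter fun ι => isClosed_iInter fun _ => isClosed_iInter fun v =>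
    isClosed_iInter fun x => isClosed_le continuous_const ?_
  fun_prop

lemma continuous_loc {c : Coef n} (hc : FinSupp c) : Continuous (loc c) := by
  refine continuous_pi fun a => continuous_pi fun b => ?_
  simp only [loc_eq_sum hc]
  fun_prop

lemma isClosed_states (hg : ∀ i, FinSupp (g i)) : IsClosed (states g R) := by
  have : states g R = {y | PD y} ∩ (⋂ i, loc (g i) ⁻¹' {y | PD y}) ∩
      (⋂ a, ⋂ b, {y : Coef n | (R : ℂ) ^ 2 * y a b = ∑ l, y (a + unitIdx l) (b + unitIdx l)}) ∩
      {y | y 0 0 = 1} := by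
    ext y
    simp only [states, Set.mem_ofPred_eq, Set.mem_inter_iff, Set.mem_iInter, Set.mem_preimage]
    exact ⟨fun ⟨h, h0⟩ => ⟨⟨⟨h.1, h.2⟩, h.3⟩, h0⟩, fun ⟨⟨⟨h1, h2⟩, h3⟩, h0⟩ => ⟨⟨h1, h2, h3⟩, h0⟩⟩
  rw [this]
  refine ((isClosed_PD.inter (isClosed_iInter fun i => isClosed_PD.preimage
    (continuous_loc (hg i)))).inter (isClosed_iInter fun a => isClosed_iInter fun b =>
      isClosed_eq ?_ ?_)).inter (isClosed_eq ?_ ?_)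
  all_goals fun_prop

lemma isCompact_states (hg : ∀ i, FinSupp (g i)) : IsCompact (states g R) := by
  refine IsCompact.of_isClosed_subset
    (isCompact_univ_pi fun a => isCompact_univ_pi fun b =>
      isCompact_closedBall (0 : ℂ) ((R ^ 2) ^ mdeg a + (R ^ 2) ^ mdeg b))
    (isClosed_states hg) ?_
  rintro y ⟨hy, h0⟩ a _ b _
  simpa [h0] using hy.norm_le a b

/-- An extreme state is pure: every admissible functional dominated by a multiple of it is
proportional to it. -/
lemma eq_smul_of_extreme (hg : ∀ i, FinSupp (g i)) (hy : y ∈ (states g R).extremePoints ℝ)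
    {C : ℝ} (hK : Adm g R K) (hL : Adm g R L) (hKL : K + L = C • y) :
    K = (K 0 0).re • y := by
  have hy0 : y 0 0 = 1 := hy.1.2
  have hsum : (K 0 0).re + (L 0 0).re = C := by
    have := congrArg Complex.re (congrFun (congrFun hKL 0) 0)
    simpa [hy0] using this
  rcases hK.mass_nonneg.eq_or_lt with h0 | hKpos
  · rw [← h0, zero_smul]
    exact hK.eq_zero h0.symm
  rcases hL.mass_nonneg.eq_or_lt with h0 | hLpos
  · have := hL.eq_zero h0.symm
    rw [this, add_zero] at hKL
    rw [← h0, add_zero] at hsum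
    rw [hsum, hKL]
  have hC : 0 < C := by linarith
  have hnorm {M : Coef n} (hM : Adm g R M) (hpos : 0 < (M 0 0).re) :
      (M 0 0).re⁻¹ • M ∈ states g R := by
    refine ⟨hM.smul hg (by positivity), ?_⟩
    have : ((M 0 0).re : ℂ) ≠ 0 := by exact_mod_cast hpos.ne'
    rw [Pi.smul_apply, Pi.smul_apply, Complex.real_smul, hM.mass_eq]
    simp [this]
  have key := hy.2 (hnorm hK hKpos) (hnorm hL hLpos)
    ⟨(K 0 0).re / C, (L 0 0).re / C, by positivity, by positivity, by field_simp; linarith, by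
      have e1 : (K 0 0).re / C * (K 0 0).re⁻¹ = C⁻¹ := by field_simp
      have e2 : (L 0 0).re / C * (L 0 0).re⁻¹ = C⁻¹ := by field_simp
      rw [smul_smul, smul_smul, e1, e2, ← smul_add, hKL, smul_smul, inv_mul_cancel₀ hC.ne',
        one_smul]⟩
  rw [← key, smul_smul, mul_inv_cancel₀ hKpos.ne', one_smul]

/-- On the sphere `(2 + 2R²) - |1 + c z_l|² = |1 - c z_l|² + 2 ∑_{j ≠ l} |z_j|²` for `|c| = 1`, so
an extreme state is an eigenvector of multiplication by `|1 + c z_l|²`. -/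
lemma twist_of_extreme (hg : ∀ i, FinSupp (g i)) (hy : y ∈ (states g R).extremePoints ℝ)
    (l : Fin n) {c : ℂ} (hc : c * conj c = 1) :
    twist 1 c l y = (twist 1 c l y 0 0).re • y := by
  have hA : Adm g R y := hy.1.1
  have h0 : Adm g R (0 : Coef n) := by simpa using hA.smul hg le_rfl
  refine eq_smul_of_extreme hg hy (C := 2 + 2 * R ^ 2) (hA.twist hg _ _ _)
    ((hA.twist hg 1 (-c) l).add hg ((Adm.sum hg (Finset.univ.erase l)
      (fun j => twist 0 1 j y) h0 fun j _ => hA.twist hg _ _ _).smul hg zero_le_two)) ?_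
  funext a b
  have hs := hA.sph a b
  rw [← Finset.add_sum_erase _ _ (Finset.mem_univ l)] at hs
  simp only [Pi.add_apply, Pi.smul_apply, Finset.sum_apply, twist, Complex.real_smul, map_one,
    map_zero, map_neg, mul_zero, zero_mul, zero_add, one_mul, mul_one]
  push_cast
  linear_combination (-2) * hs + 2 * y (a + unitIdx l) (b + unitIdx l) * hc

/-- Polarization: `4 z_l = ∑_c c̄ |1 + c z_l|²` over the fourth roots of unity `c`. -/
lemma shift_of_extreme (hg : ∀ i, FinSupp (g i)) (hy : y ∈ (states g R).extremePoints ℝ)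
    (l : Fin n) : ∃ w : ℂ, ∀ a b, y (a + unitIdx l) b = w * y a b := by
  have key (c : ℂ) (hc : c * conj c = 1) : ∃ r : ℂ, ∀ a b, twist 1 c l y a b = r * y a b :=
    ⟨_, fun a b => by
      have := congrFun (congrFun (twist_of_extreme hg hy l hc) a) b
      rwa [Pi.smul_apply, Pi.smul_apply, Complex.real_smul] at this⟩
  obtain ⟨r1, h1⟩ := key 1 (by simp)
  obtain ⟨r2, h2⟩ := key (-1) (by simp)
  obtain ⟨r3, h3⟩ := key Complex.I (by simp)
  obtain ⟨r4, h4⟩ := key (-Complex.I) (by simp)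
  refine ⟨(r1 - r2 - Complex.I * r3 + Complex.I * r4) / 4, fun a b => ?_⟩
  have e1 := h1 a b
  have e2 := h2 a b
  have e3 := h3 a b
  have e4 := h4 a b
  simp only [twist, map_one, map_neg, Complex.conj_I] at e1 e2 e3 e4
  linear_combination (e1 - e2 - Complex.I * e3 + Complex.I * e4) / 4 +
    (y (a + unitIdx l) b - y a (b + unitIdx l)) / 2 * Complex.I_sq

/-- The constraint set. -/
def kset {n m : ℕ} (g : Fin m → Coef n) : Set (Fin n → ℂ) :=
  {z | ∀ i, 0 ≤ (evalC (g i) z).re}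

lemma extreme_eq_eval (hg : ∀ i, FinSupp (g i)) (hy : y ∈ (states g R).extremePoints ℝ) :
    ∃ w ∈ kset g, ∀ a b, y a b = mpow w a * mpow (fun l => conj (w l)) b := by
  have hA : Adm g R y := hy.1.1
  have h0 : y 0 0 = 1 := hy.1.2
  choose w hw using shift_of_extreme hg hy
  have hw' (l a b) : y a (b + unitIdx l) = conj (w l) * y a b := by
    rw [hA.pd.herm (b + unitIdx l) a, hw, map_mul, ← hA.pd.herm b a]
  have hev (a b) : y a b = mpow w a * mpow (fun l => conj (w l)) b := by
    induction a using idx_induction with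
    | h1 a l ih => rw [hw, ih, mpow_add, mpow_unitIdx]; ring
    | h0 =>
      induction b using idx_induction with
      | h0 => simp [h0, mpow_zero]
      | h1 b l ih => rw [hw', ih, mpow_add (n := n) _ b, mpow_unitIdx]; ring
  refine ⟨w, fun i => ?_, hev⟩
  have := (Complex.le_def.1 ((hA.loc_pd i).diag 0)).1
  rw [loc_eq_sum (hg i)] at this
  simpa [evalC_eq_sum (hg i), hev, mul_assoc] using this

end States

/-! ### Representing measures -/

/-- The function `z^a z̄^b`. -/
noncomputable def mono {n : ℕ} (a b : Fin n → ℕ) (z : Fin n → ℂ) : ℂ :=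
  mpow z a * mpow (fun l => conj (z l)) b

lemma continuous_mono {n : ℕ} (a b : Fin n → ℕ) : Continuous (mono a b) := by
  unfold mono mpow
  fun_prop

lemma mono_add {n : ℕ} (a b u v : Fin n → ℕ) (z : Fin n → ℂ) :
    mono (a + u) (b + v) z = mono u v z * mono a b z := by
  simp only [mono, mpow_add]
  ring

lemma evalC_eq_sum_mono {n : ℕ} {c : Coef n} (hc : FinSupp c) (z : Fin n → ℂ) :
    evalC c z = ∑ p ∈ hc.supp, c p.1 p.2 * mono p.1 p.2 z := by
  simp only [evalC_eq_sum hc, mono, mul_assoc]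

lemma continuous_evalC {n : ℕ} {c : Coef n} (hc : FinSupp c) : Continuous (evalC c) := by
  have : evalC c = fun z => ∑ p ∈ hc.supp, c p.1 p.2 * mono p.1 p.2 z :=
    funext (evalC_eq_sum_mono hc)
  rw [this]
  exact continuous_finsetSum _ fun p _ => continuous_const.mul (continuous_mono _ _)

lemma conj_evalC {n : ℕ} {c : Coef n} (hc : FinSupp c) (hH : HermSym c) (z : Fin n → ℂ) :
    conj (evalC c z) = evalC c z := by
  have h1 : conj (evalC c z) = ∑ᶠ p : (Fin n → ℕ) × (Fin n → ℕ),
      c p.2 p.1 * mpow z p.2 * mpow (fun i => conj (z i)) p.1 := by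
    unfold evalC
    rw [map_finsum (starRingEnd ℂ)]
    · refine finsum_congr fun p => ?_
      rw [hH p.1 p.2, map_mul, map_mul, mpow_conj, mpow_conj, Complex.conj_conj]
      ring
    · refine Set.Finite.subset hc fun p hp => ?_
      exact left_ne_zero_of_mul (left_ne_zero_of_mul hp)
  rw [h1, evalC]
  exact (finsum_comp_equiv (Equiv.prodComm (Fin n → ℕ) (Fin n → ℕ))
    (f := fun p => c p.1 p.2 * mpow z p.1 * mpow (fun i => conj (z i)) p.2))

/-- Weighted moment matrices are positive semidefinite for a nonnegative weight. -/
lemma posSemidef_integral {n : ℕ} {ι : Type} [Fintype ι] (v : ι → (Fin n → ℕ))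
    (μ : Measure (Fin n → ℂ)) (h : (Fin n → ℂ) → ℂ) (hr : ∀ z, conj (h z) = h z)
    (h0 : ∀ᵐ z ∂μ, 0 ≤ (h z).re)
    (hi : ∀ a b, Integrable (fun z => h z * mono a b z) μ) :
    (Matrix.of fun i j => ∫ z, h z * mono (v i) (v j) z ∂μ).PosSemidef := by
  rw [Matrix.posSemidef_iff_dotProduct_mulVec]
  constructor
  · ext i j
    rw [Matrix.conjTranspose_apply, Matrix.of_apply, Matrix.of_apply]
    change conj _ = _
    rw [← integral_conj]
    refine integral_congr_ae (.of_forall fun z => ?_)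
    simp only [mono, mpow_conj, map_mul, Complex.conj_conj, hr]
    ring
  · intro x
    have : star x ⬝ᵥ ((Matrix.of fun i j => ∫ z, h z * mono (v i) (v j) z ∂μ).mulVec x) =
        ∫ z, (((h z).re * Complex.normSq (∑ i, conj (x i) * mpow z (v i)) : ℝ) : ℂ) ∂μ := by
      calc _ = ∑ i, ∑ j, ∫ z, conj (x i) * x j * (h z * mono (v i) (v j) z) ∂μ := by
            simp only [dotProduct, Matrix.mulVec, Matrix.of_apply, Finset.mul_sum,
              integral_const_mul]
            refine Finset.sum_congr rfl fun i _ => Finset.sum_congr rfl fun j _ => ?_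
            simp only [Pi.star_apply, RCLike.star_def]
            ring
        _ = ∫ z, ∑ i, ∑ j, conj (x i) * x j * (h z * mono (v i) (v j) z) ∂μ := by
            rw [integral_finsetSum _ fun i _ => integrable_finsetSum _ fun j _ =>
              (hi _ _).const_mul _]
            refine Finset.sum_congr rfl fun i _ => ?_
            rw [integral_finsetSum _ fun j _ => (hi _ _).const_mul _]
        _ = _ := by
            refine integral_congr_ae (.of_forall fun z => ?_)
            have hz : ((h z).re : ℂ) = h z := Complex.conj_eq_iff_re.1 (hr z)
            simp only [Complex.ofReal_mul, hz, ← Complex.mul_conj, map_sum]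
            rw [Finset.sum_mul_sum]
            simp only [Finset.mul_sum]
            refine Finset.sum_congr rfl fun i _ => Finset.sum_congr rfl fun j _ => ?_
            simp only [mono, mpow_conj, map_mul, Complex.conj_conj]
            ring
    rw [this, integral_complex_ofReal, Complex.zero_le_real]
    refine integral_nonneg_of_ae ?_
    filter_upwards [h0] with z hz
    exact mul_nonneg hz (Complex.normSq_nonneg _)

lemma loc_integral {n : ℕ} {c y : Coef n} (hc : FinSupp c) {μ : Measure (Fin n → ℂ)}
    (hi : ∀ a b, Integrable (mono a b) μ) (hy : ∀ a b, y a b = ∫ z, mono a b z ∂μ)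
    (a b : Fin n → ℕ) :
    Integrable (fun z => evalC c z * mono a b z) μ ∧
      loc c y a b = ∫ z, evalC c z * mono a b z ∂μ := by
  have e : (fun z => evalC c z * mono a b z) =
      fun z => ∑ p ∈ hc.supp, c p.1 p.2 * mono (a + p.1) (b + p.2) z := by
    funext z
    simp only [evalC_eq_sum_mono hc, mono_add, Finset.sum_mul, mul_assoc]
  rw [e]
  refine ⟨integrable_finsetSum _ fun p _ => (hi _ _).const_mul _, ?_⟩
  rw [integral_finsetSum _ fun p _ => (hi _ _).const_mul _, loc_eq_sum hc]
  simp only [integral_const_mul, hy]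

lemma isCompact_kset {n m : ℕ} {g : Fin m → Coef n} (hg : ∀ i, FinSupp (g i)) {R : ℝ}
    {i0 : Fin m}
    (hlo : ∀ z : Fin n → ℂ, evalC (g i0) z = (R : ℂ) ^ 2 - ∑ l, z l * conj (z l)) :
    IsCompact (kset g) := by
  have hcl : IsClosed (kset g) := by
    simp only [kset, Set.ofPred_forall]
    exact isClosed_iInter fun i => isClosed_le continuous_const
      (Complex.continuous_re.comp (continuous_evalC (hg i)))
  refine IsCompact.of_isClosed_subset
    (isCompact_univ_pi fun _ => isCompact_closedBall (0 : ℂ) |R|) hcl ?_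
  intro z hz l _
  have h := hz i0
  rw [hlo] at h
  simp only [Complex.mul_conj] at h
  have h' : ∑ l, Complex.normSq (z l) ≤ R ^ 2 := by
    rw [← Complex.ofReal_sum, ← Complex.ofReal_pow, ← Complex.ofReal_sub, Complex.ofReal_re] at h
    linarith
  have h2 : Complex.normSq (z l) ≤ R ^ 2 :=
    (Finset.single_le_sum (f := fun l => Complex.normSq (z l))
      (fun j _ => Complex.normSq_nonneg _) (Finset.mem_univ l)).trans h'
  rw [Complex.normSq_eq_norm_sq] at h2
  simpa using sq_le_sq.1 h2

/-- The moment array of a probability measure on the constraint set. -/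
noncomputable def momMap {n m : ℕ} (g : Fin m → Coef n) (μ : ProbabilityMeasure (kset g)) :
    Coef n := fun a b => ∫ z, mono a b z.1 ∂(μ : Measure (kset g))

section Range
variable {n m : ℕ} {g : Fin m → Coef n} [CompactSpace (kset g)]

lemma integrable_mono (μ : Measure (kset g)) [IsFiniteMeasure μ] (a b : Fin n → ℕ) :
    Integrable (fun z : kset g => mono a b z.1) μ :=
  (BoundedContinuousFunction.mkOfCompact
    ⟨_, (continuous_mono a b).comp continuous_subtype_val⟩).integrable μ

lemma continuous_momMap : Continuous (momMap g) := by
  refine continuous_pi fun a => continuous_pi fun b => ?_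
  refine continuous_iff_continuousAt.2 fun μ => ?_
  exact (ProbabilityMeasure.tendsto_iff_forall_integral_rclike_tendsto ℂ).1
    (Filter.tendsto_id (α := ProbabilityMeasure (kset g))) (BoundedContinuousFunction.mkOfCompact
      ⟨fun z : kset g => mono a b z.1, (continuous_mono a b).comp continuous_subtype_val⟩)

lemma convex_range_momMap : Convex ℝ (Set.range (momMap g)) := by
  rintro _ ⟨μ, rfl⟩ _ ⟨ν, rfl⟩ s t hs ht hst
  let ρ : Measure (kset g) := ENNReal.ofReal s • (μ : Measure (kset g)) +
    ENNReal.ofReal t • (ν : Measure (kset g))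
  have hρ : IsProbabilityMeasure ρ := ⟨by
    simp [ρ, ← ENNReal.ofReal_add hs ht, hst]⟩
  refine ⟨⟨ρ, hρ⟩, ?_⟩
  funext a b
  change ∫ z, mono a b z.1 ∂ρ = _
  rw [integral_add_measure ((integrable_mono _ _ _).smul_measure ENNReal.ofReal_ne_top)
    ((integrable_mono _ _ _).smul_measure ENNReal.ofReal_ne_top), integral_smul_measure,
    integral_smul_measure, ENNReal.toReal_ofReal hs, ENNReal.toReal_ofReal ht]
  rfl

/-- By Krein–Milman a state is a limit of convex combinations of point evaluations, and the moment
arrays of probability measures form a compact convex set containing those evaluations. -/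
lemma states_subset (hg : ∀ i, FinSupp (g i)) {R : ℝ} :
    states g R ⊆ Set.range (momMap g) := by
  rw [← closure_convexHull_extremePoints (isCompact_states hg) (convex_states hg)]
  refine closure_minimal (convexHull_min ?_ convex_range_momMap)
    (isCompact_range continuous_momMap).isClosed
  intro y hy
  obtain ⟨w, hw, h⟩ := extreme_eq_eval hg hy
  refine ⟨⟨Measure.dirac ⟨w, hw⟩, Measure.dirac.isProbabilityMeasure⟩, ?_⟩
  funext a b
  change ∫ z : kset g, mono a b z.1 ∂(Measure.dirac _) = _
  rw [integral_dirac, h]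
  rfl

end Range

/-- Representation of an admissible array of arbitrary mass, by rescaling to a state. -/
lemma Adm.exists_measure {n m : ℕ} {g : Fin m → Coef n} (hg : ∀ i, FinSupp (g i)) {R : ℝ}
    (hK : IsCompact (kset g)) {y : Coef n} (hy : Adm g R y) :
    ∃ μ : Measure (Fin n → ℂ), μ (kset g)ᶜ = 0 ∧
      ∀ a b, Integrable (mono a b) μ ∧ y a b = ∫ z, mono a b z ∂μ := by
  rcases hy.mass_nonneg.eq_or_lt with h0 | hpos
  · refine ⟨0, by simp, fun a b => ?_⟩
    simp [hy.eq_zero h0.symm]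
  have : CompactSpace (kset g) := isCompact_iff_compactSpace.1 hK
  have hmem : (y 0 0).re⁻¹ • y ∈ states g R := by
    refine ⟨hy.smul hg (by positivity), ?_⟩
    have : ((y 0 0).re : ℂ) ≠ 0 := by exact_mod_cast hpos.ne'
    rw [Pi.smul_apply, Pi.smul_apply, Complex.real_smul, hy.mass_eq]
    simp [this]
  obtain ⟨ν, hν⟩ := states_subset hg hmem
  have hemb := MeasurableEmbedding.subtype_coe hK.measurableSet
  refine ⟨ENNReal.ofReal (y 0 0).re • (ν : Measure (kset g)).map Subtype.val, ?_, fun a b => ?_⟩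
  · rw [Measure.smul_apply, hemb.map_apply]
    simp
  · refine ⟨Integrable.smul_measure ?_ ENNReal.ofReal_ne_top, ?_⟩
    · rw [hemb.integrable_map_iff]
      exact integrable_mono _ _ _
    · rw [integral_smul_measure, hemb.integral_map, ENNReal.toReal_ofReal hpos.le]
      have := congrFun (congrFun hν a) b
      change ∫ z, mono a b z.1 ∂(ν : Measure (kset g)) = _ at this
      rw [this, Pi.smul_apply, Pi.smul_apply, smul_smul, mul_inv_cancel₀ hpos.ne', one_smul]

/-- Any finite family of multi-indices lies below some degree, so it suffices to test the truncated
matrices of all large orders. -/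
lemma PD.of_posSemidef {n : ℕ} {K : Coef n} (D : ℕ)
    (h : ∀ d, D ≤ d → (Matrix.of fun a b : Idx n d => K a.1 b.1).PosSemidef) : PD K := by
  intro ι _ v x
  have hle (i : ι) : mdeg (v i) ≤ D + ∑ i, mdeg (v i) :=
    (Finset.single_le_sum (f := fun i => mdeg (v i)) (fun _ _ => Nat.zero_le _)
      (Finset.mem_univ i)).trans (Nat.le_add_left _ _)
  have hM := (h _ (Nat.le_add_right _ _)).submatrix
    fun i : ι => (⟨v i, hle i⟩ : Idx n (D + ∑ i, mdeg (v i)))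
  have := (Matrix.posSemidef_iff_dotProduct_mulVec.1 hM).2 x
  change 0 ≤ ∑ i, conj (x i) * ∑ j, K (v i) (v j) * x j at this
  simpa only [Finset.mul_sum, mul_assoc] using this

/-! ### The equivalence -/

/-- Putinar–Scheiderer moment characterization on the sphere. -/
theorem stmt1 {n m : ℕ} (g : Fin m → Coef n) (k : Fin m → ℕ)
    (hgH : ∀ i, HermSym (g i)) (hgd : ∀ i, DegLE (g i) (k i))
    (R : ℝ) (hR : 0 < R) (i0 i1 : Fin m)
    (hsphLo : ∀ z : Fin n → ℂ,
      evalC (g i0) z = (R : ℂ)^2 - ∑ l, z l * conj (z l))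
    (hsphHi : ∀ z : Fin n → ℂ,
      evalC (g i1) z = (∑ l, z l * conj (z l)) - (R : ℂ)^2)
    (y : Coef n) (hyH : HermSym y) :
    (∃ μ : Measure (Fin n → ℂ),
        μ {z | ¬ ∀ i, 0 ≤ (evalC (g i) z).re} = 0 ∧
        ∀ α β : Fin n → ℕ,
          Integrable (fun z : Fin n → ℂ =>
            mpow z α * mpow (fun l => conj (z l)) β) μ ∧
          y α β = ∫ z, mpow z α * mpow (fun l => conj (z l)) β ∂μ)
      ↔
    (∀ d : ℕ, (∀ i, k i ≤ d) →
        (momentMat y d).PosSemidef ∧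
        ∀ i, (locMat (g i) y (d - k i)).PosSemidef) := by
  have hg (i) : FinSupp (g i) := (hgd i).finSupp
  constructor
  · rintro ⟨μ, hμ, hmom⟩ d hd
    have hi (a b) : Integrable (mono a b) μ := (hmom a b).1
    have hy (a b) : y a b = ∫ z, mono a b z ∂μ := (hmom a b).2
    constructor
    · have := posSemidef_integral (fun a : Idx n d => a.1) μ (fun _ => 1) (by simp) (by simp)
        (by simpa using hi)
      simpa [momentMat, hy] using this
    · intro i
      have hae : ∀ᵐ z ∂μ, ∀ i, 0 ≤ (evalC (g i) z).re := hμ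
      have := posSemidef_integral (fun a : Idx n (d - k i) => a.1) μ (evalC (g i))
        (conj_evalC (hg i) (hgH i)) (hae.mono fun z hz => hz i)
        fun a b => (loc_integral (hg i) hi hy a b).1
      simp only [← (loc_integral (hg i) hi hy _ _).2] at this
      exact this
  · intro h
    have hD (i) : k i ≤ ∑ i, k i :=
      Finset.single_le_sum (fun _ _ => Nat.zero_le _) (Finset.mem_univ i)
    have hloc (i) : PD (loc (g i) y) := by
      refine PD.of_posSemidef (∑ i, k i) fun d hd => ?_
      have := (h (d + k i) fun j => (hD j).trans (hd.trans (Nat.le_add_right _ _))).2 i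
      rwa [Nat.add_sub_cancel] at this
    have hpd : PD y := PD.of_posSemidef (∑ i, k i) fun d hd =>
      (h d fun j => (hD j).trans hd).1
    have hlo := loc_sphere (hg i0) R 1 (by simpa using hsphLo) y
    have hhi := loc_sphere (hg i1) R (-1) (by simpa using hsphHi) y
    -- The two sphere constraints give opposite localizing arrays, both positive: they vanish.
    have hneg (a b) : loc (g i1) y a b = -loc (g i0) y a b := by rw [hlo, hhi]; ring
    have hdiag (a) : loc (g i0) y a a = 0 := by
      refine le_antisymm ?_ ((hloc i0).diag a)
      have := (hloc i1).diag a
      rw [hneg] at this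
      exact neg_nonneg.1 this
    have hzero (a b) : loc (g i0) y a b = 0 := by
      have := (hloc i0).norm_le a b
      rw [hdiag, hdiag] at this
      simpa using this
    have hA : Adm g R y := ⟨hpd, hloc, fun a b => by
      have := hzero a b
      rw [hlo, one_mul] at this
      exact sub_eq_zero.1 this⟩
    exact hA.exists_measure hg (isCompact_kset hg hsphLo)

end Stmt
end

section
/- Let A be a Hermitian positive semidefinite complex matrix of size (p+q)×(p+q) with block form A = [[B, C],[Cᴴ, D]], where B is p×p, C is p×q, and D is q×q. If rank A = rank B, then there exists a p×q complex matrix W such that C = B·W and D = Cᴴ·W; in particular, every column of A indexed by the last q indices is a linear combination of the columns of A indexed by the first p indices. -/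
/-!
Let `S` be the matrix of the first `p` columns of `A`. Since `B` is a submatrix of `S` and `S` is a
submatrix of `A`, `rank B ≤ rank S ≤ rank A`, so `rank A = rank B` forces the column spaces of `S`
and `A` to have the same dimension. The former is contained in the latter, hence they agree, and
every column of `A` indexed by the last `q` indices is a combination of the columns of `S`. The
coefficients are the columns of `W`; the upper rows of `A` give `C = B W`, and the lower rows give
`D = Cᴴ W` because `A` is Hermitian.
-/

open scoped BigOperators ComplexOrder
open Matrix

namespace Stmt

/-- the flat-extension lemma for positive semidefinite block matrices. -/
theorem stmt11 {p q : ℕ} (A : Matrix (Fin p ⊕ Fin q) (Fin p ⊕ Fin q) ℂ)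
    (hA : A.PosSemidef) (hrank : A.rank = (A.toBlocks₁₁).rank) :
    ∃ W : Matrix (Fin p) (Fin q) ℂ,
      A.toBlocks₁₂ = A.toBlocks₁₁ * W ∧
      A.toBlocks₂₂ = (A.toBlocks₁₂)ᴴ * W ∧
      ∀ j : Fin q, ∃ c : Fin p → ℂ,
        ∀ r : Fin p ⊕ Fin q, A r (Sum.inr j) = ∑ l, c l * A r (Sum.inl l) := by
  let S : Matrix (Fin p ⊕ Fin q) (Fin p) ℂ := A.submatrix id Sum.inl
  have hBS : A.toBlocks₁₁.rank ≤ S.rank := rank_submatrix_le S Sum.inl id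
  have hspan : Submodule.span ℂ (Set.range S.col) = Submodule.span ℂ (Set.range A.col) := by
    apply Submodule.eq_of_le_of_finrank_le
    · apply Submodule.span_mono
      rintro _ ⟨l, rfl⟩
      exact ⟨Sum.inl l, rfl⟩
    · rw [← rank_eq_finrank_span_cols, ← rank_eq_finrank_span_cols, hrank]
      exact hBS
  have hcol (j : Fin q) : ∃ c : Fin p → ℂ,
      ∀ r : Fin p ⊕ Fin q, A r (Sum.inr j) = ∑ l, c l * A r (Sum.inl l) := by
    have hmem : A.col (Sum.inr j) ∈ Submodule.span ℂ (Set.range S.col) :=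
      hspan ▸ Submodule.subset_span ⟨_, rfl⟩
    obtain ⟨c, hc⟩ := (Submodule.mem_span_range_iff_exists_fun ℂ).1 hmem
    refine ⟨c, fun r => ?_⟩
    simpa [S] using (congrFun hc r).symm
  choose c hc using hcol
  refine ⟨Matrix.of fun l j => c j l, ?_, ?_, fun j => ⟨c j, hc j⟩⟩
  · ext i j
    simp [toBlocks₁₂, toBlocks₁₁, mul_apply, hc, mul_comm]
  · ext i j
    have hH (l : Fin p) : star (A (Sum.inl l) (Sum.inr i)) = A (Sum.inr i) (Sum.inl l) :=
      hA.isHermitian.apply _ _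
    simp only [toBlocks₁₂, toBlocks₂₂, mul_apply, conjTranspose_apply, of_apply, hH]
    rw [hc]
    exact Finset.sum_congr rfl fun l _ => mul_comm _ _

end Stmt
end

section
/- Let n ≥ 1, R > 0, d' ∈ ℕ, and let (y_{α,β})_{|α|,|β|≤d'+1} be complex numbers indexed by multi-indices α, β ∈ ℕⁿ with y_{β,α} = conj(y_{α,β}). Assume the moment matrix M_{d'+1}(y) = (y_{α,β})_{|α|,|β|≤d'+1} is positive semidefinite and the localizing matrix of the ball constraint, (R² y_{α,β} − Σ_{k=1}^n y_{α+e_k,β+e_k})_{|α|,|β|≤d'}, is positive semidefinite. Then for every k = 1,…,n and every family of complex coefficients (w_α)_{|α|≤d'}: 0 ≤ Σ_{|α|,|β|≤d'} conj(w_α) w_β y_{α+e_k,β+e_k} ≤ R² · Σ_{|α|,|β|≤d'} conj(w_α) w_β y_{α,β}. -/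
/-! Write `Q_l(w) = ∑ conj(w_α) w_β y_{α+e_l,β+e_l}`. The matrix of `Q_l` is the pullback of
the moment matrix of order `d' + 1` along `α ↦ α + e_l`, hence positive semidefinite, so
`Q_l(w) ≥ 0` for every `l`. Positivity of the localizing matrix says `∑_l Q_l(w) ≤ R² Q(w)`, with
`Q` the form of the moment matrix of order `d'`; a single nonnegative term is bounded by the sum. -/

open scoped BigOperators ComplexConjugate ComplexOrder
open MeasureTheory

namespace Stmt

lemma mdeg_add_single {n : ℕ} (α : Fin n → ℕ) (k : Fin n) :
    mdeg (α + Pi.single k 1) = mdeg α + 1 := by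
  simp [mdeg, Finset.sum_add_distrib]

lemma quadForm_re_nonneg {ι : Type*} [Fintype ι] {M : Matrix ι ι ℂ} (hM : M.PosSemidef)
    (w : ι → ℂ) : 0 ≤ (∑ a, ∑ b, conj (w a) * w b * M a b).re := by
  have h := (Complex.le_def.1 (hM.dotProduct_mulVec_nonneg w)).1
  rw [Complex.zero_re] at h
  convert h using 2
  simp only [dotProduct, Matrix.mulVec, Finset.mul_sum, Pi.star_apply, starRingEnd_apply]
  exact Finset.sum_congr rfl fun a _ => Finset.sum_congr rfl fun b _ => by ring

/-- the shift quadratic-form bound coming from the ball constraint. -/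
theorem stmt12 {n : ℕ} (hn : 1 ≤ n) (R : ℝ) (hR : 0 < R) (d' : ℕ)
    (y : Coef n) (hyH : HermSym y)
    (hM : (momentMat y (d' + 1)).PosSemidef)
    (hB : (Matrix.of fun a b : Idx n d' =>
        (R : ℂ)^2 * y a.1 b.1
          - ∑ l, y (a.1 + Pi.single l 1) (b.1 + Pi.single l 1)).PosSemidef) :
    ∀ (k : Fin n) (w : Idx n d' → ℂ),
      0 ≤ (∑ a : Idx n d', ∑ b : Idx n d',
            conj (w a) * w b * y (a.1 + Pi.single k 1) (b.1 + Pi.single k 1)).re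
      ∧
      (∑ a : Idx n d', ∑ b : Idx n d',
          conj (w a) * w b * y (a.1 + Pi.single k 1) (b.1 + Pi.single k 1)).re
        ≤ R^2 * (∑ a : Idx n d', ∑ b : Idx n d', conj (w a) * w b * y a.1 b.1).re := by
  intro k w
  have hshift : ∀ l : Fin n, 0 ≤ (∑ a : Idx n d', ∑ b : Idx n d',
      conj (w a) * w b * y (a.1 + Pi.single l 1) (b.1 + Pi.single l 1)).re := fun l =>
    quadForm_re_nonneg
      (hM.submatrix fun a : Idx n d' =>
        (⟨a.1 + Pi.single l 1, by
          rw [mdeg_add_single]; exact Nat.succ_le_succ a.2⟩ : Idx n (d' + 1))) w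
  refine ⟨hshift k, ?_⟩
  have hsum := Finset.single_le_sum (fun l _ => hshift l) (Finset.mem_univ k)
  have hloc := quadForm_re_nonneg hB w
  have hsplit : (∑ a : Idx n d', ∑ b : Idx n d', conj (w a) * w b *
        ((R : ℂ)^2 * y a.1 b.1 - ∑ l, y (a.1 + Pi.single l 1) (b.1 + Pi.single l 1)))
      = ((R^2 : ℝ) : ℂ) * (∑ a : Idx n d', ∑ b : Idx n d', conj (w a) * w b * y a.1 b.1)
        - ∑ l, ∑ a : Idx n d', ∑ b : Idx n d',
          conj (w a) * w b * y (a.1 + Pi.single l 1) (b.1 + Pi.single l 1) := by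
    rw [Finset.sum_comm (s := (Finset.univ : Finset (Fin n)))]
    simp_rw [Finset.sum_comm (s := (Finset.univ : Finset (Fin n)))]
    simp only [Finset.mul_sum, mul_sub, Finset.sum_sub_distrib]
    congr 1
    refine Finset.sum_congr rfl fun a _ => Finset.sum_congr rfl fun b _ => ?_
    push_cast
    ring
  simp only [Matrix.of_apply] at hloc
  rw [hsplit, Complex.sub_re, Complex.re_ofReal_mul, Complex.re_sum Finset.univ fun l : Fin n => _] at hloc
  linarith

end Stmt
end

section
/- Let f, g₁,…,g_m be balanced real-valued complex polynomials in n complex variables (i.e. all their coefficients f_{α,β}, g_{i,α,β} vanish unless |α| = |β|), let λ ∈ ℝ, and suppose there exist Hermitian sums-of-squares σ₀ of degree ≤ d₀ and σᵢ of degree ≤ dᵢ (i = 1,…,m) such that f(z,z̄) − λ = σ₀(z) + Σ_{i=1}^m σᵢ(z) gᵢ(z,z̄) for all z ∈ ℂⁿ. Then there exist Hermitian sums-of-squares τ₀ of degree ≤ d₀ and τᵢ of degree ≤ dᵢ, each invariant under the torus action (τᵢ(e^{iθ}z) = τᵢ(z) for all θ ∈ ℝ, z ∈ ℂⁿ), such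 that f(z,z̄) − λ = τ₀(z) + Σ_{i=1}^m τᵢ(z) gᵢ(z,z̄) for all z ∈ ℂⁿ. -/
/-!
A torus average turns the given certificate into an invariant one. Since `f` and the `gᵢ` are
balanced, they are unchanged by `z ↦ w z` with `|w| = 1`, so the identity may be averaged over
`w`. Write a polynomial `p` of degree `≤ d` as the sum of its homogeneous parts `q_j`, so that
`p (w z) = ∑_j w ^ j q_j(z)`. By Parseval the average of `|p (w z)|²` is `∑_j |q_j(z)|²`, which
is again a Hermitian sum-of-squares of degree `≤ d`, and is visibly invariant.

Averaging over the `N`-th roots of unity with `N > d` has the same effect as integrating over the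
circle (`parseval_roots`). The invariant `τ` built from `σ` does not depend on `N`
(`exists_invariant_average`), so one `N` exceeding all the degree bounds serves the whole
certificate.
-/

open scoped BigOperators ComplexConjugate ComplexOrder
open MeasureTheory

namespace Stmt

/-- The coefficients vanish off the balanced diagonal `|α| = |β|`. -/
def Balanced {n : ℕ} (c : Coef n) : Prop :=
  ∀ α β, mdeg α ≠ mdeg β → c α β = 0

lemma mpow_smul {n : ℕ} (w : ℂ) (z : Fin n → ℂ) (α : Fin n → ℕ) :
    mpow (fun l => w * z l) α = w ^ mdeg α * mpow z α := by
  simp only [mpow, mdeg, mul_pow, Finset.prod_mul_distrib, Finset.prod_pow_eq_pow_sum]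

lemma evalC_smul {n : ℕ} {c : Coef n} (hc : Balanced c) {w : ℂ} (hw : w * conj w = 1)
    (z : Fin n → ℂ) : evalC c (fun l => w * z l) = evalC c z := by
  unfold evalC
  refine finsum_congr fun p => ?_
  by_cases h : mdeg p.1 = mdeg p.2
  · have hconj : mpow (fun l => conj (w * z l)) p.2
        = conj w ^ mdeg p.1 * mpow (fun l => conj (z l)) p.2 := by
      simp only [map_mul]
      rw [mpow_smul, h]
    rw [hconj, mpow_smul]
    have hpow : w ^ mdeg p.1 * conj w ^ mdeg p.1 = 1 := by rw [← mul_pow, hw, one_pow]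
    linear_combination c p.1 p.2 * mpow z p.1 * mpow (fun l => conj (z l)) p.2 * hpow
  · simp [hc _ _ h]

/-- Orthogonality of the characters `w ↦ w ^ j`, `j < N`, on the `N`-th roots of unity. -/
lemma sum_roots {N : ℕ} {ω : ℂ} (hω : IsPrimitiveRoot ω N) (hc : ω * conj ω = 1)
    {j k : ℕ} (hj : j < N) (hk : k < N) :
    ∑ t ∈ Finset.range N, (ω ^ t) ^ j * conj ((ω ^ t) ^ k) = if j = k then (N : ℂ) else 0 := by
  have hterm : ∀ t, (ω ^ t) ^ j * conj ((ω ^ t) ^ k) = (ω ^ j * conj ω ^ k) ^ t := by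
    intro t
    simp only [map_pow, mul_pow, ← pow_mul]
    rw [mul_comm t j, mul_comm t k]
  have hck : ω ^ k * conj ω ^ k = 1 := by rw [← mul_pow, hc, one_pow]
  simp only [hterm]
  split_ifs with h
  · subst h
    simp [hck]
  · have hne : ω ^ j * conj ω ^ k ≠ 1 := by
      intro h1
      apply h
      apply hω.pow_inj hj hk
      linear_combination ω ^ k * h1 - ω ^ j * hck
    have hN : (ω ^ j * conj ω ^ k) ^ N = 1 := by
      rw [mul_pow, ← pow_mul, ← pow_mul, mul_comm j, mul_comm k, pow_mul, pow_mul, ← map_pow,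
        hω.pow_eq_one]
      simp
    have hgeom := mul_geom_sum (ω ^ j * conj ω ^ k) N
    rw [hN, sub_self] at hgeom
    exact (mul_eq_zero.mp hgeom).resolve_left (sub_ne_zero.mpr hne)

lemma parseval_roots {N d : ℕ} (hd : d < N) {ω : ℂ} (hω : IsPrimitiveRoot ω N)
    (hc : ω * conj ω = 1) (a : Fin (d + 1) → ℂ) :
    ∑ t ∈ Finset.range N, Complex.normSq (∑ j : Fin (d + 1), (ω ^ t) ^ (j : ℕ) * a j)
      = N * ∑ j, Complex.normSq (a j) := by
  apply Complex.ofReal_injective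
  push_cast
  simp only [← Complex.mul_conj, map_sum, Finset.sum_mul_sum]
  rw [Finset.sum_comm, Finset.mul_sum]
  refine Finset.sum_congr rfl fun j _ => ?_
  rw [Finset.sum_comm]
  have hterm : ∀ k : Fin (d + 1),
      ∑ t ∈ Finset.range N, (ω ^ t) ^ (j : ℕ) * a j * conj ((ω ^ t) ^ (k : ℕ) * a k)
        = if j = k then N * (a j * conj (a k)) else 0 := by
    intro k
    have h := sum_roots hω hc (j := j) (k := k) (by omega) (by omega)
    calc _ = (∑ t ∈ Finset.range N, (ω ^ t) ^ (j : ℕ) * conj ((ω ^ t) ^ (k : ℕ)))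
          * (a j * conj (a k)) := by
          rw [Finset.sum_mul]
          refine Finset.sum_congr rfl fun t _ => ?_
          rw [map_mul]; ring
      _ = _ := by
          rw [h]
          simp only [Fin.val_inj]
          split_ifs <;> simp
  rw [Finset.sum_congr rfl fun k _ => hterm k]
  simp

/-- Value at `z` of the degree-`j` homogeneous part of the polynomial with coefficients `p`. -/
noncomputable def homPart {n : ℕ} (p : (Fin n → ℕ) → ℂ) (j : ℕ) (z : Fin n → ℂ) : ℂ :=
  ∑ᶠ α : Fin n → ℕ, (if mdeg α = j then p α else 0) * mpow z α

lemma homPart_smul {n : ℕ} (p : (Fin n → ℕ) → ℂ) (j : ℕ) (w : ℂ)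
    (z : Fin n → ℂ) : homPart p j (fun l => w * z l) = w ^ j * homPart p j z := by
  unfold homPart
  rw [mul_finsum]
  refine finsum_congr fun α => ?_
  rw [mpow_smul]
  split_ifs with h
  · rw [h]; ring
  · simp

lemma sum_homPart {n d : ℕ} (p : (Fin n → ℕ) → ℂ) (hp : ∀ α, ¬ mdeg α ≤ d → p α = 0)
    (z : Fin n → ℂ) : ∑ᶠ α, p α * mpow z α = ∑ j : Fin (d + 1), homPart p j z := by
  have hfin : (Function.support p).Finite :=
    (Set.finite_range fun a : Idx n d => a.1).subset fun α hα =>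
      ⟨⟨α, not_not.mp fun h => hα (hp α h)⟩, rfl⟩
  unfold homPart
  rw [← finsum_sum_comm]
  · refine finsum_congr fun α => ?_
    by_cases h : mdeg α ≤ d
    · rw [Finset.sum_eq_single_of_mem (⟨mdeg α, by omega⟩ : Fin (d + 1)) (Finset.mem_univ _)]
      · simp
      · intro j _ hj
        rw [if_neg fun h' => hj (Fin.ext h'.symm), zero_mul]
    · simp [hp α h]
  · intro j _
    refine hfin.subset fun α hα h0 => hα ?_
    simp [h0]

/-- The invariant sum-of-squares `τ` is the average of `σ` over the `N`-th roots of unity, for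
every `N > d` simultaneously. -/
lemma exists_invariant_average {n d : ℕ} {σ : (Fin n → ℂ) → ℝ} (hσ : IsHermSOSDeg σ d) :
    ∃ τ : (Fin n → ℂ) → ℝ, IsHermSOSDeg τ d ∧
      (∀ (w : ℂ), w * conj w = 1 → ∀ z, τ (fun l => w * z l) = τ z) ∧
      ∀ (N : ℕ) (ω : ℂ), d < N → IsPrimitiveRoot ω N → ω * conj ω = 1 → ∀ z,
        ∑ t ∈ Finset.range N, σ (fun l => ω ^ t * z l) = N * τ z := by
  obtain ⟨K, p, hp, hσ⟩ := hσ
  refine ⟨fun z => ∑ k, ∑ j : Fin (d + 1), Complex.normSq (homPart (p k) j z), ?_, ?_, ?_⟩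
  · refine ⟨K * (d + 1), fun q α =>
      if mdeg α = (finProdFinEquiv.symm q).2 then p (finProdFinEquiv.symm q).1 α else 0, ?_, ?_⟩
    · intro q α h
      simp [hp _ α h]
    · intro z
      rw [← finProdFinEquiv.sum_comp]
      simp only [Equiv.symm_apply_apply]
      rw [Fintype.sum_prod_type]
      rfl
  · intro w hw z
    have hn : Complex.normSq w = 1 := by
      rw [Complex.mul_conj] at hw
      exact_mod_cast hw
    simp only [homPart_smul, map_mul, map_pow, hn, one_pow, one_mul]
  · intro N ω hd hω hc z
    simp only [hσ]
    rw [Finset.sum_comm, Finset.mul_sum]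
    refine Finset.sum_congr rfl fun k _ => ?_
    simp only [sum_homPart (p k) (hp k), homPart_smul]
    exact parseval_roots hd hω hc _

/-- a Hermitian sum-of-squares certificate for balanced data can be
chosen torus-invariant with the same degree bounds. -/
theorem stmt19 {n m : ℕ} (f : Coef n) (g : Fin m → Coef n)
    (hfH : HermSym f) (hfF : FinSupp f) (hfB : Balanced f)
    (hgH : ∀ i, HermSym (g i)) (hgF : ∀ i, FinSupp (g i)) (hgB : ∀ i, Balanced (g i))
    (lam : ℝ) (d0 : ℕ) (dd : Fin m → ℕ)
    (σ0 : (Fin n → ℂ) → ℝ) (σ : Fin m → (Fin n → ℂ) → ℝ)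
    (hσ0 : IsHermSOSDeg σ0 d0) (hσ : ∀ i, IsHermSOSDeg (σ i) (dd i))
    (heq : ∀ z : Fin n → ℂ,
      (evalC f z).re - lam = σ0 z + ∑ i, σ i z * (evalC (g i) z).re) :
    ∃ (τ0 : (Fin n → ℂ) → ℝ) (τ : Fin m → (Fin n → ℂ) → ℝ),
      IsHermSOSDeg τ0 d0 ∧ (∀ i, IsHermSOSDeg (τ i) (dd i)) ∧
      (∀ (θ : ℝ) (z : Fin n → ℂ),
        τ0 (fun l => Complex.exp (θ * Complex.I) * z l) = τ0 z) ∧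
      (∀ (i : Fin m) (θ : ℝ) (z : Fin n → ℂ),
        τ i (fun l => Complex.exp (θ * Complex.I) * z l) = τ i z) ∧
      ∀ z : Fin n → ℂ,
        (evalC f z).re - lam = τ0 z + ∑ i, τ i z * (evalC (g i) z).re := by
  obtain ⟨τ0, hτ0, hinv0, havg0⟩ := exists_invariant_average hσ0
  choose τ hτ hinv havg using fun i => exists_invariant_average (hσ i)
  have hexp : ∀ θ : ℝ, Complex.exp (θ * Complex.I) * conj (Complex.exp (θ * Complex.I)) = 1 := by
    intro θ
    rw [Complex.mul_conj, Complex.normSq_eq_norm_sq, Complex.norm_exp_ofReal_mul_I]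
    simp
  refine ⟨τ0, τ, hτ0, hτ, fun θ z => hinv0 _ (hexp θ) z, fun i θ z => hinv i _ (hexp θ) z, ?_⟩
  intro z
  -- a single order exceeding all the degree bounds
  set N := d0 + ∑ i, dd i + 1 with hN
  have hN0 : N ≠ 0 := by omega
  have hdd : ∀ i, dd i < N := fun i => by
    have := Finset.single_le_sum (f := dd) (fun j _ => Nat.zero_le _) (Finset.mem_univ i)
    omega
  obtain ⟨ω, hω⟩ : ∃ ω : ℂ, IsPrimitiveRoot ω N := ⟨_, Complex.isPrimitiveRoot_exp N hN0⟩
  have hc : ω * conj ω = 1 := by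
    rw [Complex.mul_conj, Complex.normSq_eq_norm_sq, hω.norm'_eq_one hN0]
    simp
  have hct : ∀ t : ℕ, ω ^ t * conj (ω ^ t) = 1 := fun t => by
    rw [map_pow, ← mul_pow, hc, one_pow]
  have hsum : ∑ t ∈ Finset.range N, ((evalC f z).re - lam)
      = ∑ t ∈ Finset.range N, (σ0 (fun l => ω ^ t * z l)
          + ∑ i, σ i (fun l => ω ^ t * z l) * (evalC (g i) z).re) := by
    refine Finset.sum_congr rfl fun t _ => ?_
    have h := heq (fun l => ω ^ t * z l)
    rw [evalC_smul hfB (hct t)] at h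
    simpa only [evalC_smul (hgB _) (hct t)] using h
  rw [Finset.sum_add_distrib, Finset.sum_comm, havg0 N ω (by omega) hω hc] at hsum
  simp only [← Finset.sum_mul, havg _ N ω (hdd _) hω hc, Finset.sum_const, Finset.card_range,
    nsmul_eq_mul, mul_assoc, ← Finset.mul_sum, ← mul_add] at hsum
  exact mul_left_cancel₀ (Nat.cast_ne_zero.mpr hN0) hsum

end Stmt
end
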